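/- Let (V,E,Ψ) be a strongly connected planar box-like self-affine GIFS satisfying the ROSC in which every T_e is diagonal, with positive weights (p_e) and graph-directed measure family (μ_v)_{v∈V}. Let q≥0 and suppose max{γ_A(q),γ_B(q)} ≤ t(q). Then for every v∈V the L^q-spectrum τ_{μ_v}(q) exists and equals max{γ_A(q),γ_B(q)}, which moreover equals the maximum of x+y over pairs (x,y)∈ℝ² with ρ(F^{(q)}_{x,y})=1 and γ_B(q)−τ_B(q) ≤ x ≤ τ_A(q), and also equals the maximum of x+y over pairs (x,y)∈ℝ² with ρ(F^{(q)}_{x,y})=1 and γ_A(q)−τ_A(q) ≤ y ≤ τ_B(q). -/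

import Mathlib

open MeasureTheory Filter Set
open scoped Classical

noncomputable section

namespace LqGIFS

/-! ### Mesh cubes, moment sums, L^q spectra, box dimension -/

/-- Closed cube of the `δ`-mesh of `ℝ`. -/
def meshCube1 (δ : ℝ) (k : ℤ) : Set ℝ := Set.Icc ((k : ℝ) * δ) (((k : ℝ) + 1) * δ)

/-- Closed cube of the `δ`-mesh of `ℝ²`. -/
def meshCube2 (δ : ℝ) (k : ℤ × ℤ) : Set (ℝ × ℝ) :=
  (Set.Icc ((k.1 : ℝ) * δ) (((k.1 : ℝ) + 1) * δ)) ×ˢ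
    (Set.Icc ((k.2 : ℝ) * δ) (((k.2 : ℝ) + 1) * δ))

/-- The moment sum `D_δ^q(ν)` for a measure on `ℝ` (cubes of zero measure are omitted,
so that at `q = 0` this counts the mesh cubes of positive measure). -/
def Dq1 (ν : Measure ℝ) (δ q : ℝ) : ℝ :=
  ∑' k : ℤ, if ν (meshCube1 δ k) = 0 then 0 else (ν (meshCube1 δ k)).toReal ^ q

/-- The moment sum `D_δ^q(ν)` for a measure on `ℝ²`. -/
def Dq2 (ν : Measure (ℝ × ℝ)) (δ q : ℝ) : ℝ :=
  ∑' k : ℤ × ℤ, if ν (meshCube2 δ k) = 0 then 0 else (ν (meshCube2 δ k)).toReal ^ q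

/-- The `L^q`-spectrum of a measure on `ℝ` exists and equals `s` (i.e. upper and lower
`L^q`-spectra coincide and equal `s`). -/
def HasLq1 (ν : Measure ℝ) (q s : ℝ) : Prop :=
  Tendsto (fun δ : ℝ => Real.log (Dq1 ν δ q) / (-Real.log δ))
    (nhdsWithin 0 (Set.Ioi 0)) (nhds s)

/-- The `L^q`-spectrum of a measure on `ℝ²` exists and equals `s`. -/
def HasLq2 (ν : Measure (ℝ × ℝ)) (q s : ℝ) : Prop :=
  Tendsto (fun δ : ℝ => Real.log (Dq2 ν δ q) / (-Real.log δ))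
    (nhdsWithin 0 (Set.Ioi 0)) (nhds s)

/-- Number of closed `δ`-mesh cubes of `ℝ²` meeting `X`. -/
def boxCount (X : Set (ℝ × ℝ)) (δ : ℝ) : ℕ :=
  Set.ncard {k : ℤ × ℤ | (X ∩ meshCube2 δ k).Nonempty}

/-- The box dimension of `X` exists and equals `d`. -/
def HasBoxDim (X : Set (ℝ × ℝ)) (d : ℝ) : Prop :=
  Tendsto (fun δ : ℝ => Real.log (boxCount X δ) / (-Real.log δ))
    (nhdsWithin 0 (Set.Ioi 0)) (nhds d)

/-! ### Matrices: 1-norm, spectral radius, permutation matrices -/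

/-- The 1-norm `‖A‖ = ∑_{i,j} |a_{ij}|` of a square matrix. -/
def mnorm {ι : Type*} [Fintype ι] (A : Matrix ι ι ℝ) : ℝ := ∑ i, ∑ j, |A i j|

/-- The spectral radius of a square real matrix, via the Gelfand formula. -/
def specRad {ι : Type*} [Fintype ι] [DecidableEq ι] (A : Matrix ι ι ℝ) : ℝ :=
  Filter.limsup (fun k : ℕ => (mnorm (A ^ k)) ^ ((k : ℝ)⁻¹)) Filter.atTop

/-- A square 0-1 matrix with exactly one 1 in each row and each column. -/
def IsPermMatrix {ι : Type*} (Z : Matrix ι ι ℝ) : Prop :=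
  (∀ i j, Z i j = 0 ∨ Z i j = 1) ∧ (∀ i, ∃! j, Z i j = 1) ∧ (∀ j, ∃! i, Z i j = 1)

/-! ### Directed graphs -/

/-- Strong connectivity of the finite directed graph with edge set `E`,
initial vertex map `ini` and terminal vertex map `ter`. -/
def GraphSC {V E : Type*} (ini ter : E → V) : Prop :=
  ∀ v v' : V, Relation.TransGen (fun u u' : V => ∃ e, ini e = u ∧ ter e = u') v v'

/-- The matrix `F^{(q)}_{x,y}` with entry `p_{e'}^q a_{e'}^x b_{e'}^y` at `(e,e')` when
`t(e) = i(e')`, and `0` otherwise. -/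
def FmatG {V E : Type*} (ini ter : E → V) (p a b : E → ℝ) (q x y : ℝ) :
    Matrix E E ℝ :=
  fun e e' => if ter e = ini e' then p e' ^ q * a e' ^ x * b e' ^ y else 0

/-- `f` is the entrywise product of the normalized left and right Perron vectors of the
irreducible matrix `F^{(q)}_{x,y(x)}` (spectral radius 1). -/
def IsPerronData {V E : Type*} [Fintype E] [DecidableEq E] (ini ter : E → V)
    (p a b : E → ℝ) (q x yx : ℝ) (f : E → ℝ) : Prop :=
  specRad (FmatG ini ter p a b q x yx) = 1 ∧
  ∃ u v : E → ℝ, (∀ e, 0 < u e) ∧ (∀ e, 0 < v e) ∧ (∑ e, u e) = 1 ∧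
    (FmatG ini ter p a b q x yx).mulVec u = u ∧
    (FmatG ini ter p a b q x yx).vecMul v = v ∧
    (∑ e, v e * u e) = 1 ∧ (∀ e, f e = v e * u e)

/-! ### Planar box-like graph-directed self-affine systems -/

/-- A planar box-like self-affine GIFS: a finite directed graph together with, for each
edge `e`, a contraction `ψ_e(z) = T_e z + t_e` whose linear part is the diagonal matrix
`diag(±a_e, ±b_e)` (when `diag e = true`) or the anti-diagonal matrix with entries
`±a_e` (top right) and `±b_e` (bottom left) (when `diag e = false`), `0 < a_e, b_e < 1`. -/
structure BoxLikeGIFS (V E : Type*) where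
  init : E → V
  term : E → V
  a : E → ℝ
  b : E → ℝ
  sa : E → ℝ
  sb : E → ℝ
  diag : E → Bool
  trans : E → ℝ × ℝ
  a_mem : ∀ e, a e ∈ Set.Ioo (0 : ℝ) 1
  b_mem : ∀ e, b e ∈ Set.Ioo (0 : ℝ) 1
  sa_mem : ∀ e, sa e = 1 ∨ sa e = -1
  sb_mem : ∀ e, sb e = 1 ∨ sb e = -1
  edge_exists : ∀ v, ∃ e, init e = v

namespace BoxLikeGIFS

variable {V E : Type*}

/-- The contraction `ψ_e`. -/
def map (S : BoxLikeGIFS V E) (e : E) : ℝ × ℝ → ℝ × ℝ := fun z =>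
  if S.diag e then
    (S.sa e * S.a e * z.1 + (S.trans e).1, S.sb e * S.b e * z.2 + (S.trans e).2)
  else
    (S.sa e * S.a e * z.2 + (S.trans e).1, S.sb e * S.b e * z.1 + (S.trans e).2)

def StronglyConnected (S : BoxLikeGIFS V E) : Prop := GraphSC S.init S.term

/-- The open unit square `(0,1)²`. -/
def unitSq : Set (ℝ × ℝ) := Set.Ioo (0 : ℝ) 1 ×ˢ Set.Ioo (0 : ℝ) 1

/-- The rectangular open set condition. -/
def ROSC (S : BoxLikeGIFS V E) : Prop :=
  (∀ e : E, S.map e '' unitSq ⊆ unitSq) ∧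
  ∀ e e' : E, e ≠ e' → S.init e = S.init e' →
    Disjoint (S.map e '' unitSq) (S.map e' '' unitSq)

/-- Positive weights summing to one at each vertex. -/
def IsWeights [Fintype E] (S : BoxLikeGIFS V E) (p : E → ℝ) : Prop :=
  (∀ e, 0 < p e) ∧ ∀ v : V, (∑ e : E, if S.init e = v then p e else 0) = 1

/-- `μ` is the associated graph-directed box-like self-affine measure family. -/
def IsGDMeasure [Fintype E] (S : BoxLikeGIFS V E) (p : E → ℝ)
    (μ : V → Measure (ℝ × ℝ)) : Prop :=
  (∀ v, IsProbabilityMeasure (μ v)) ∧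
  ∀ v : V, μ v =
    ∑ e : E, if S.init e = v then
      ENNReal.ofReal (p e) • ((μ (S.term e)).map (S.map e)) else (0 : Measure (ℝ × ℝ))

/-- `X` is the associated graph-directed self-affine carpet family. -/
def IsGDAttractor (S : BoxLikeGIFS V E) (X : V → Set (ℝ × ℝ)) : Prop :=
  (∀ v, (X v).Nonempty ∧ IsCompact (X v)) ∧
  ∀ v : V, X v = ⋃ e : E, ⋃ _ : S.init e = v, S.map e '' X (S.term e)

/-- The matrix `F^{(q)}_{x,y}` of the system. -/
def Fmat (S : BoxLikeGIFS V E) (p : E → ℝ) (q x y : ℝ) : Matrix E E ℝ :=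
  FmatG S.init S.term p S.a S.b q x y

/-- The `(2#E) × (2#E)` block matrix `𝒢^{(q)}_{x,y}`, indexed by `E × Bool`
(`false` = first index of the block, `true` = second). -/
def Gmat (S : BoxLikeGIFS V E) (p : E → ℝ) (τx τy : V → ℝ) (q x y : ℝ) :
    Matrix (E × Bool) (E × Bool) ℝ := fun i j =>
  if S.term i.1 = S.init j.1 then
    if S.diag j.1 then
      if i.2 = false ∧ j.2 = false then
        p j.1 ^ q * S.a j.1 ^ (x + τx (S.term j.1)) * S.b j.1 ^ (y - τx (S.term j.1))
      else if i.2 = true ∧ j.2 = true then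
        p j.1 ^ q * S.b j.1 ^ (x + τy (S.term j.1)) * S.a j.1 ^ (y - τy (S.term j.1))
      else 0
    else
      if i.2 = false ∧ j.2 = true then
        p j.1 ^ q * S.a j.1 ^ (x + τy (S.term j.1)) * S.b j.1 ^ (y - τy (S.term j.1))
      else if i.2 = true ∧ j.2 = false then
        p j.1 ^ q * S.b j.1 ^ (x + τx (S.term j.1)) * S.a j.1 ^ (y - τx (S.term j.1))
      else 0
  else 0

/-! ### Words -/

/-- An admissible word: consecutive edges are composable. -/
def Admissible (S : BoxLikeGIFS V E) (w : List E) : Prop :=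
  List.Chain' (fun e e' => S.term e = S.init e') w

/-- `(c_w, d_w)`: width and height of the rectangle `ψ_w([0,1]²)`. -/
def wdims (S : BoxLikeGIFS V E) : List E → ℝ × ℝ
  | [] => (1, 1)
  | e :: w =>
      if S.diag e then (S.a e * (wdims S w).1, S.b e * (wdims S w).2)
      else (S.a e * (wdims S w).2, S.b e * (wdims S w).1)

/-- Whether `T_w` is diagonal (`true`) or anti-diagonal (`false`). -/
def wordDiag (S : BoxLikeGIFS V E) : List E → Bool
  | [] => true
  | e :: w => S.diag e == wordDiag S w

/-- The larger singular value `α₁(w) = max(c_w, d_w)` of `T_w`. -/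
def alpha1 (S : BoxLikeGIFS V E) (w : List E) : ℝ := max (S.wdims w).1 (S.wdims w).2

/-- The smaller singular value `α₂(w) = min(c_w, d_w)` of `T_w`. -/
def alpha2 (S : BoxLikeGIFS V E) (w : List E) : ℝ := min (S.wdims w).1 (S.wdims w).2

/-- Initial vertex of a (nonempty) word. -/
def wordInit [Nonempty V] (S : BoxLikeGIFS V E) (w : List E) : V :=
  (w.head?.map S.init).getD (Classical.arbitrary V)

/-- Terminal vertex of a (nonempty) word. -/
def wordTerm [Nonempty V] (S : BoxLikeGIFS V E) (w : List E) : V :=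
  (w.getLast?.map S.term).getD (Classical.arbitrary V)

/-- `p_w = p_{w_1} ⋯ p_{w_k}`. -/
def wordProb (p : E → ℝ) (w : List E) : ℝ := (w.map p).prod

/-- `τ_w(q)`: given the values `τx v`, `τy v` of the `L^q`-spectra of the two coordinate
projections of `μ_v`, this is the `L^q`-spectrum of the projection of `μ_{t(w)} ∘ ψ_w⁻¹`
onto the longest side of `ψ_w([0,1]²)`, i.e. `τx (t w)` if `π_w = π_x` and `τy (t w)`
otherwise. -/
def wordTau [Nonempty V] (S : BoxLikeGIFS V E) (τx τy : V → ℝ) (w : List E) : ℝ :=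
  if ((S.wdims w).2 ≤ (S.wdims w).1 ↔ S.wordDiag w = true) then τx (S.wordTerm w)
  else τy (S.wordTerm w)

/-- The modified singular value function
`φ^{s,q}(w) = p_w^q α₁(w)^{τ_w(q)} α₂(w)^{s - τ_w(q)}`. -/
def msvf [Nonempty V] (S : BoxLikeGIFS V E) (p : E → ℝ) (τx τy : V → ℝ)
    (s q : ℝ) (w : List E) : ℝ :=
  wordProb p w ^ q * S.alpha1 w ^ (S.wordTau τx τy w) *
    S.alpha2 w ^ (s - S.wordTau τx τy w)

/-- The modified singular value function matrix `A_k^{s,q}`. -/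
def Amat [Nonempty V] [Fintype E] (S : BoxLikeGIFS V E) (p : E → ℝ) (τx τy : V → ℝ)
    (s q : ℝ) (k : ℕ) : Matrix V V ℝ := fun v v' =>
  ∑ f : Fin k → E,
    if S.Admissible (List.ofFn f) ∧ S.wordInit (List.ofFn f) = v ∧
        S.wordTerm (List.ofFn f) = v'
    then S.msvf p τx τy s q (List.ofFn f) else 0

/-- The family `E^*_δ` of admissible words whose shortest side drops below `δ`
exactly at the last letter. -/
def EstarDelta (S : BoxLikeGIFS V E) (δ : ℝ) : Set (List E) :=
  {w | w ≠ [] ∧ S.Admissible w ∧ S.alpha2 w < δ ∧ δ ≤ S.alpha2 w.dropLast}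

end BoxLikeGIFS

/-! ### Partition of the projections, for the splitting proposition -/

/-- The projection family: `(v, false) ↦ μ_v^x` and `(v, true) ↦ μ_v^y`. -/
def projMeas {V : Type*} (μ : V → Measure (ℝ × ℝ)) (i : V × Bool) : Measure ℝ :=
  if i.2 then (μ i.1).map Prod.snd else (μ i.1).map Prod.fst

/-- `A`, `B` is a partition of the projection family `{μ_v^x, μ_v^y}_v` into two disjoint
families of cardinality `#V`, on each of which the `L^q`-spectra exist and share a common
value, and which splits `{μ_v^x, μ_v^y}` for each `v`. -/
def GoodPartition {V : Type*} [Fintype V] (μ : V → Measure (ℝ × ℝ))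
    (A B : Finset (V × Bool)) : Prop :=
  Disjoint A B ∧ A ∪ B = Finset.univ ∧
  A.card = Fintype.card V ∧ B.card = Fintype.card V ∧
  ∃ τA τB : ℝ → ℝ,
    (∀ q : ℝ, 0 ≤ q → ∀ i ∈ A, HasLq1 (projMeas μ i) q (τA q)) ∧
    (∀ q : ℝ, 0 ≤ q → ∀ i ∈ B, HasLq1 (projMeas μ i) q (τB q)) ∧
    ∀ v : V, ((v, false) ∈ A ∧ (v, true) ∈ B) ∨ ((v, false) ∈ B ∧ (v, true) ∈ A)

end LqGIFS

end

open LqGIFS MeasureTheory Filter Set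

namespace LqGIFS

/-! ### Moment sums -/

/-- The summand `x ^ q` of a moment sum, with the convention that null cells are omitted. -/
noncomputable def qpow (q x : ℝ) : ℝ := if x = 0 then 0 else x ^ q

lemma qpow_nonneg {q x : ℝ} (hx : 0 ≤ x) : 0 ≤ qpow q x := by
  unfold qpow
  split_ifs
  · exact le_rfl
  · exact Real.rpow_nonneg hx q

lemma qpow_mono {q x y : ℝ} (hq : 0 ≤ q) (hx : 0 ≤ x) (hxy : x ≤ y) : qpow q x ≤ qpow q y := by
  rcases hx.eq_or_lt with rfl | hx'
  · simpa [qpow] using qpow_nonneg (q := q) hxy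
  · simp only [qpow, hx'.ne', (hx'.trans_le hxy).ne', if_false]
    exact Real.rpow_le_rpow hx hxy hq

lemma qpow_mul {q x y : ℝ} (hx : 0 < x) (hy : 0 ≤ y) : qpow q (x * y) = x ^ q * qpow q y := by
  unfold qpow
  by_cases h : y = 0
  · simp [h]
  · simp [h, hx.ne', Real.mul_rpow hx.le hy]

lemma qpow_one (q : ℝ) : qpow q 1 = 1 := by simp [qpow]

/-- Comparison of moment sums of two arrays, one of which is dominated by the other through a
relation of bounded multiplicity. -/
lemma sum_qpow_le {ι κ : Type*} (I : Finset ι) (J : Finset κ) (x : ι → ℝ) (y : κ → ℝ)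
    (R : ι → κ → Prop) {q M M' : ℝ} (hq : 0 ≤ q) (hM0 : 0 ≤ M)
    (hx : ∀ i ∈ I, 0 ≤ x i) (hy : ∀ j ∈ J, 0 ≤ y j)
    (hxy : ∀ i ∈ I, x i ≤ ∑ j ∈ J with R i j, y j)
    (hM : ∀ i ∈ I, (((J.filter (R i)).card : ℕ) : ℝ) ≤ M)
    (hM' : ∀ j ∈ J, (((I.filter (R · j)).card : ℕ) : ℝ) ≤ M') :
    ∑ i ∈ I, qpow q (x i) ≤ M ^ q * M' * ∑ j ∈ J, qpow q (y j) := by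
  have key : ∀ i ∈ I, qpow q (x i) ≤ M ^ q * ∑ j ∈ J with R i j, qpow q (y j) := by
    intro i hi
    rcases (J.filter (R i)).eq_empty_or_nonempty with he | hne
    · have : x i = 0 := le_antisymm (by simpa [he] using hxy i hi) (hx i hi)
      simp [he, this, qpow]
    · obtain ⟨j, hj, hmax⟩ := Finset.exists_max_image (J.filter (R i)) y hne
      have hM1 : 0 < M := lt_of_lt_of_le (by exact_mod_cast hne.card_pos) (hM i hi)
      have hyj : 0 ≤ y j := hy j (Finset.mem_filter.1 hj).1
      have h1 : x i ≤ M * y j := by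
        refine (hxy i hi).trans ((Finset.sum_le_card_nsmul _ _ _ hmax).trans ?_)
        rw [nsmul_eq_mul]
        exact mul_le_mul_of_nonneg_right (hM i hi) hyj
      calc qpow q (x i) ≤ qpow q (M * y j) := qpow_mono hq (hx i hi) h1
        _ = M ^ q * qpow q (y j) := qpow_mul hM1 hyj
        _ ≤ _ := by
          refine mul_le_mul_of_nonneg_left ?_ (Real.rpow_nonneg hM0 q)
          exact Finset.single_le_sum (f := fun j => qpow q (y j))
            (fun k hk => qpow_nonneg (hy k (Finset.mem_filter.1 hk).1)) hj
  refine (Finset.sum_le_sum key).trans ?_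
  rw [← Finset.mul_sum, mul_assoc]
  refine mul_le_mul_of_nonneg_left ?_ (Real.rpow_nonneg hM0 q)
  simp only [Finset.sum_filter]
  rw [Finset.sum_comm, Finset.mul_sum]
  refine Finset.sum_le_sum fun j hj => ?_
  rw [← Finset.sum_filter, Finset.sum_const, nsmul_eq_mul]
  exact mul_le_mul_of_nonneg_right (hM' j hj) (qpow_nonneg (hy j hj))

lemma measure_ite_eq_qpow {X : Type*} [MeasurableSpace X] (ν : Measure X) [IsFiniteMeasure ν]
    (A : Set X) (q : ℝ) : (if ν A = 0 then 0 else (ν A).toReal ^ q) = qpow q (ν.real A) := by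
  have h : ν.real A = 0 ↔ ν A = 0 := measureReal_eq_zero_iff
  by_cases hA : ν A = 0
  · simp [qpow, h.2 hA, hA]
  · simp only [qpow, hA, h.not.2 hA, if_false]
    rfl

lemma exists_mem_meshCube1 {δ : ℝ} (hδ : 0 < δ) (x : ℝ) : x ∈ meshCube1 δ ⌊x / δ⌋ := by
  constructor
  · exact (le_div_iff₀ hδ).1 (Int.floor_le _)
  · exact ((div_lt_iff₀ hδ).1 (Int.lt_floor_add_one _)).le

lemma floor_div_mem_Icc {δ x : ℝ} {N : ℕ} (hδ : 0 < δ) (hN : 1 / δ ≤ N) (hx : x ∈ Icc (0 : ℝ) 1) :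
    ⌊x / δ⌋ ∈ Finset.Icc (-(N : ℤ)) N := by
  have h0 : 0 ≤ ⌊x / δ⌋ := Int.floor_nonneg.2 (div_nonneg hx.1 hδ.le)
  have h1 : ⌊x / δ⌋ ≤ N := by
    have : (⌊x / δ⌋ : ℝ) ≤ N :=
      (Int.floor_le _).trans ((div_le_div_of_nonneg_right hx.2 hδ.le).trans hN)
    exact_mod_cast this
  rw [Finset.mem_Icc]
  omega

/-- Only the mesh intervals with index in `[-N, N]` meet the unit interval. -/
lemma mem_Icc_of_mem_meshCube1 {δ x : ℝ} {N : ℕ} {k : ℤ} (hδ : 0 < δ) (hN : 1 / δ ≤ N)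
    (hx : x ∈ Icc (0 : ℝ) 1) (hk : x ∈ meshCube1 δ k) : k ∈ Finset.Icc (-(N : ℤ)) N := by
  have hN' : 1 ≤ N * δ := (div_le_iff₀ hδ).1 hN
  obtain ⟨h1, h2⟩ := hk
  rw [Finset.mem_Icc]
  constructor
  · by_contra! h
    have : ((k : ℝ) + 1) ≤ -N := by exact_mod_cast (show k + 1 ≤ -(N : ℤ) by omega)
    nlinarith [hx.1]
  · by_contra! h
    have : (N : ℝ) + 1 ≤ k := by exact_mod_cast (show (N : ℤ) + 1 ≤ k by omega)
    nlinarith [hx.2]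

lemma Dq1_eq_sum (ν : Measure ℝ) [IsFiniteMeasure ν] (hν : ν (Icc (0 : ℝ) 1)ᶜ = 0)
    {δ : ℝ} {N : ℕ} (hδ : 0 < δ) (hN : 1 / δ ≤ N) (q : ℝ) :
    Dq1 ν δ q = ∑ k ∈ Finset.Icc (-(N : ℤ)) N, qpow q (ν.real (meshCube1 δ k)) := by
  unfold Dq1
  simp only [measure_ite_eq_qpow]
  refine tsum_eq_sum fun k hk => ?_
  have : ν (meshCube1 δ k) = 0 := measure_mono_null
    (fun x hx hx' => hk (mem_Icc_of_mem_meshCube1 hδ hN hx' hx)) hν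
  simp [qpow, Measure.real, this]

/-- The closed unit square. -/
def closedSq : Set (ℝ × ℝ) := Icc (0 : ℝ) 1 ×ˢ Icc (0 : ℝ) 1

lemma Dq2_eq_sum (ν : Measure (ℝ × ℝ)) [IsFiniteMeasure ν] (hν : ν closedSqᶜ = 0)
    {δ : ℝ} {N : ℕ} (hδ : 0 < δ) (hN : 1 / δ ≤ N) (q : ℝ) :
    Dq2 ν δ q = ∑ k ∈ Finset.Icc (-(N : ℤ)) N ×ˢ Finset.Icc (-(N : ℤ)) N,
      qpow q (ν.real (meshCube2 δ k)) := by
  unfold Dq2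
  simp only [measure_ite_eq_qpow]
  refine tsum_eq_sum fun k hk => ?_
  have hsub : meshCube2 δ k ⊆ closedSqᶜ := fun x hx (hx' : x ∈ closedSq) =>
    hk (Finset.mem_product.2
      ⟨mem_Icc_of_mem_meshCube1 hδ hN hx'.1 hx.1, mem_Icc_of_mem_meshCube1 hδ hN hx'.2 hx.2⟩)
  have : ν (meshCube2 δ k) = 0 := measure_mono_null hsub hν
  simp [qpow, Measure.real, this]

lemma Dq1_le (ν : Measure ℝ) [IsProbabilityMeasure ν] (hν : ν (Icc (0 : ℝ) 1)ᶜ = 0)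
    {δ q : ℝ} {N : ℕ} (hq : 0 ≤ q) (hδ : 0 < δ) (hN : 1 / δ ≤ N) :
    Dq1 ν δ q ≤ 2 * N + 1 := by
  rw [Dq1_eq_sum ν hν hδ hN]
  have h : ∀ k ∈ Finset.Icc (-(N : ℤ)) N, qpow q (ν.real (meshCube1 δ k)) ≤ 1 := fun k _ =>
    (qpow_mono hq measureReal_nonneg measureReal_le_one).trans_eq (qpow_one q)
  refine (Finset.sum_le_card_nsmul _ _ _ h).trans_eq ?_
  have : ((N : ℤ) + 1 + (N : ℤ)).toNat = 2 * N + 1 := by omega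
  simp [this]

lemma one_le_mul_Dq1 (ν : Measure ℝ) [IsProbabilityMeasure ν] (hν : ν (Icc (0 : ℝ) 1)ᶜ = 0)
    {δ q : ℝ} {N : ℕ} (hq : 0 ≤ q) (hδ : 0 < δ) (hN : 1 / δ ≤ N) :
    1 ≤ (2 * N + 1 : ℝ) ^ q * Dq1 ν δ q := by
  rw [Dq1_eq_sum ν hν hδ hN]
  have := sum_qpow_le {()} (Finset.Icc (-(N : ℤ)) N) (fun _ => (1 : ℝ))
    (fun k => ν.real (meshCube1 δ k)) (fun _ _ => True) (q := q) (M := 2 * N + 1) (M' := 1) hq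
    (by positivity) (fun _ _ => zero_le_one) (fun _ _ => measureReal_nonneg) ?_ ?_ ?_
  · simpa [qpow_one] using this
  · intro _ _
    simp only [Finset.filter_true]
    have h1 : ν (Icc (0 : ℝ) 1) = 1 := by
      rwa [prob_compl_eq_zero_iff measurableSet_Icc] at hν
    calc (1 : ℝ) = ν.real (Icc (0 : ℝ) 1) := by simp [Measure.real, h1]
      _ ≤ ν.real (⋃ k ∈ Finset.Icc (-(N : ℤ)) N, meshCube1 δ k) := by
        refine measureReal_mono (fun x hx => ?_) (measure_ne_top _ _)
        simp only [mem_iUnion]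
        exact ⟨_, floor_div_mem_Icc hδ hN hx, exists_mem_meshCube1 hδ x⟩
      _ ≤ _ := measureReal_biUnion_finset_le _ _
  · intro _ _
    have : ((N : ℤ) + 1 + (N : ℤ)).toNat = 2 * N + 1 := by omega
    simp [this]
  · intro _ _
    simp

lemma Dq1_pos (ν : Measure ℝ) [IsProbabilityMeasure ν] (hν : ν (Icc (0 : ℝ) 1)ᶜ = 0)
    {δ q : ℝ} (hq : 0 ≤ q) (hδ : 0 < δ) : 0 < Dq1 ν δ q := by
  have := one_le_mul_Dq1 ν hν hq hδ (Nat.le_ceil (1 / δ))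
  exact pos_of_mul_pos_right (zero_lt_one.trans_le this) (by positivity)

lemma rpow_abs_le_rpow {s₀ s x : ℝ} (h0 : 0 < s₀) (hs : s₀ ≤ s) (h1 : s ≤ 1) :
    s₀ ^ |x| ≤ s ^ x :=
  (Real.rpow_le_rpow h0.le hs (abs_nonneg x)).trans
    (Real.rpow_le_rpow_of_exponent_ge (h0.trans_le hs) h1 (le_abs_self x))

lemma rpow_le_rpow_neg_abs {s₀ s x : ℝ} (h0 : 0 < s₀) (hs : s₀ ≤ s) (h1 : s ≤ 1) :
    s ^ x ≤ (s₀ ^ |x|)⁻¹ := by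
  rw [le_inv_comm₀ (Real.rpow_pos_of_pos (h0.trans_le hs) _) (Real.rpow_pos_of_pos h0 _),
    ← Real.rpow_neg (h0.trans_le hs).le, ← abs_neg]
  exact rpow_abs_le_rpow h0 hs h1

/-- The existence of the `L^q`-spectrum gives power bounds, up to `ε`, at all scales `s ≤ 1`. -/
lemma HasLq1.eventually_bounds {ν : Measure ℝ} [IsProbabilityMeasure ν]
    (hν : ν (Icc (0 : ℝ) 1)ᶜ = 0) {q τ ε : ℝ} (hq : 0 ≤ q) (h : HasLq1 ν q τ) (hε : 0 < ε) :
    ∀ᶠ C : ℝ in atTop, ∀ s ∈ Ioc (0 : ℝ) 1,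
      s ^ (-τ + ε) ≤ C * Dq1 ν s q ∧ Dq1 ν s q ≤ C * s ^ (-τ - ε) := by
  have h1 := (Metric.tendsto_nhds.1 h ε hε)
  rw [eventually_nhdsWithin_iff, Metric.eventually_nhds_iff] at h1
  obtain ⟨r, hr, h1⟩ := h1
  set s₀ := min (r / 2) 1 with hs₀
  have hs₀pos : 0 < s₀ := by positivity
  set N := ⌈1 / s₀⌉₊ with hN
  filter_upwards [eventually_ge_atTop 1,
    eventually_ge_atTop ((s₀ ^ |(-τ + ε)|)⁻¹ * (2 * N + 1 : ℝ) ^ q),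
    eventually_ge_atTop ((2 * N + 1 : ℝ) * (s₀ ^ |(-τ - ε)|)⁻¹)] with C hC1 hC2 hC3 s hs
  have hD := Dq1_pos ν hν hq hs.1
  rcases lt_or_ge s s₀ with hlt | hge
  · have hs1 : s < 1 := hlt.trans_le (min_le_right _ _)
    have hsr : s < r := hlt.trans_le ((min_le_left _ _).trans (by linarith))
    have hlog : 0 < -Real.log s := neg_pos.2 (Real.log_neg hs.1 hs1)
    have h2 := h1 (y := s) (by rwa [Real.dist_eq, sub_zero, abs_of_pos hs.1]) hs.1
    rw [Real.dist_eq, abs_lt, neg_lt_sub_iff_lt_add, sub_lt_iff_lt_add, div_lt_iff₀ hlog,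
      ← sub_lt_iff_lt_add', lt_div_iff₀ hlog] at h2
    have hup : Dq1 ν s q ≤ s ^ (-τ - ε) := by
      rw [← Real.log_le_log_iff hD (Real.rpow_pos_of_pos hs.1 _), Real.log_rpow hs.1]
      nlinarith [h2.2]
    have hlo : s ^ (-τ + ε) ≤ Dq1 ν s q := by
      rw [← Real.log_le_log_iff (Real.rpow_pos_of_pos hs.1 _) hD, Real.log_rpow hs.1]
      nlinarith [h2.1]
    exact ⟨hlo.trans (le_mul_of_one_le_left hD.le hC1),
      hup.trans (le_mul_of_one_le_left (Real.rpow_nonneg hs.1.le _) hC1)⟩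
  · have hNs : 1 / s ≤ N := (one_div_le_one_div_of_le hs₀pos hge).trans (Nat.le_ceil _)
    constructor
    · calc s ^ (-τ + ε) ≤ (s₀ ^ |(-τ + ε)|)⁻¹ := rpow_le_rpow_neg_abs hs₀pos hge hs.2
        _ ≤ (s₀ ^ |(-τ + ε)|)⁻¹ * ((2 * N + 1 : ℝ) ^ q * Dq1 ν s q) :=
          le_mul_of_one_le_right (by positivity) (one_le_mul_Dq1 ν hν hq hs.1 hNs)
        _ ≤ C * Dq1 ν s q := by
          rw [← mul_assoc]
          exact mul_le_mul_of_nonneg_right hC2 hD.le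
    · have hpos : 0 < s₀ ^ |(-τ - ε)| := Real.rpow_pos_of_pos hs₀pos _
      calc Dq1 ν s q ≤ 2 * N + 1 := Dq1_le ν hν hq hs.1 hNs
        _ = (2 * N + 1 : ℝ) * (s₀ ^ |(-τ - ε)|)⁻¹ * s₀ ^ |(-τ - ε)| := by
          field_simp
        _ ≤ C * s ^ (-τ - ε) :=
          mul_le_mul hC3 (rpow_abs_le_rpow hs₀pos hge hs.2) hpos.le (by linarith)

/-- Power bounds up to `ε` identify the growth exponent. -/
lemma tendsto_log_div_of_bounds {f : ℝ → ℝ} {γ : ℝ}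
    (h : ∀ ε > 0, ∃ C > 0, ∀ δ ∈ Ioo (0 : ℝ) 1,
      δ ^ (-γ + ε) ≤ C * f δ ∧ f δ ≤ C * δ ^ (-γ - ε)) :
    Tendsto (fun δ => Real.log (f δ) / (-Real.log δ)) (nhdsWithin 0 (Ioi 0)) (nhds γ) := by
  rw [Metric.tendsto_nhds]
  intro ε hε
  obtain ⟨C, hC, hb⟩ := h (ε / 2) (half_pos hε)
  have hlogtop : Tendsto (fun δ : ℝ => -Real.log δ) (nhdsWithin 0 (Ioi 0)) atTop :=
    tendsto_neg_atBot_atTop.comp Real.tendsto_log_nhdsGT_zero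
  filter_upwards [hlogtop.eventually_gt_atTop 0,
    hlogtop.eventually_gt_atTop (2 * |Real.log C| / ε), self_mem_nhdsWithin,
    mem_nhdsWithin_of_mem_nhds (Iio_mem_nhds one_pos)] with δ hδ1 hδ2 hδ0 hδ3
  obtain ⟨h1, h2⟩ := hb δ ⟨hδ0, hδ3⟩
  have hf : 0 < f δ :=
    pos_of_mul_pos_right ((Real.rpow_pos_of_pos hδ0 _).trans_le h1) hC.le
  have h1' := Real.log_le_log (Real.rpow_pos_of_pos hδ0 _) h1
  have h2' := Real.log_le_log hf h2
  rw [Real.log_rpow hδ0, Real.log_mul hC.ne' hf.ne'] at h1'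
  rw [Real.log_mul hC.ne' (Real.rpow_pos_of_pos hδ0 _).ne', Real.log_rpow hδ0] at h2'
  rw [div_lt_iff₀ hε] at hδ2
  have := abs_le.1 (le_refl |Real.log C|)
  rw [Real.dist_eq, abs_lt, neg_lt_sub_iff_lt_add, sub_lt_iff_lt_add, div_lt_iff₀ hδ1,
    ← sub_lt_iff_lt_add', lt_div_iff₀ hδ1]
  constructor <;> nlinarith

/-! ### Cells -/

/-- A cell: a weight, an affine map `z ↦ (sx z₁ + tx, sy z₂ + ty)` and a vertex. -/
structure Cell (V : Type) where
  prob : ℝ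
  sx : ℝ
  sy : ℝ
  tx : ℝ
  ty : ℝ
  vert : V

namespace Cell

variable {V : Type}

/-- The affine map of a cell. -/
def map (w : Cell V) (z : ℝ × ℝ) : ℝ × ℝ := (w.sx * z.1 + w.tx, w.sy * z.2 + w.ty)

/-- Composition of cells. -/
def comp (w w' : Cell V) : Cell V where
  prob := w.prob * w'.prob
  sx := w.sx * w'.sx
  sy := w.sy * w'.sy
  tx := w.sx * w'.tx + w.tx
  ty := w.sy * w'.ty + w.ty
  vert := w'.vert

lemma map_comp (w w' : Cell V) : (w.comp w').map = w.map ∘ w'.map := by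
  funext z
  simp only [map, comp, Function.comp, Prod.mk.injEq]
  constructor <;> ring

lemma continuous_map (w : Cell V) : Continuous w.map := by
  unfold map
  fun_prop

lemma map_injective {w : Cell V} (hx : w.sx ≠ 0) (hy : w.sy ≠ 0) : Function.Injective w.map := by
  intro z z' h
  simp only [map, Prod.mk.injEq, add_left_inj, mul_right_inj' hx, mul_right_inj' hy] at h
  exact Prod.ext h.1 h.2

/-- The cell at vertex `v` with the identity map. -/
def one (v : V) : Cell V := ⟨1, 1, 1, 0, 0, v⟩

lemma map_one (v : V) : (one v).map = id := by
  funext z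
  simp [map, one]

end Cell

namespace BoxLikeGIFS

variable {V E : Type}

/-- The cell of an edge. -/
def edgeCell (S : BoxLikeGIFS V E) (p : E → ℝ) (e : E) : Cell V where
  prob := p e
  sx := S.sa e * S.a e
  sy := S.sb e * S.b e
  tx := (S.trans e).1
  ty := (S.trans e).2
  vert := S.term e

lemma map_edgeCell (S : BoxLikeGIFS V E) (p : E → ℝ) {e : E} (he : S.diag e = true) :
    (S.edgeCell p e).map = S.map e := by
  funext z
  simp [Cell.map, edgeCell, BoxLikeGIFS.map, he]

lemma abs_sx_edgeCell (S : BoxLikeGIFS V E) (p : E → ℝ) (e : E) :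
    |(S.edgeCell p e).sx| = S.a e := by
  rcases S.sa_mem e with h | h <;> simp [edgeCell, h, abs_of_pos (S.a_mem e).1]

lemma abs_sy_edgeCell (S : BoxLikeGIFS V E) (p : E → ℝ) (e : E) :
    |(S.edgeCell p e).sy| = S.b e := by
  rcases S.sb_mem e with h | h <;> simp [edgeCell, h, abs_of_pos (S.b_mem e).1]

/-- Two-sided bounds for the contraction ratios. -/
lemma exists_ratio_bounds [Finite E] (S : BoxLikeGIFS V E) :
    ∃ η r : ℝ, 0 < η ∧ η < 1 ∧ 0 < r ∧ r < 1 ∧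
      ∀ e, η ≤ S.a e ∧ η ≤ S.b e ∧ S.a e ≤ r ∧ S.b e ≤ r := by
  have h1 : ∀ᶠ η : ℝ in nhdsWithin 0 (Ioi 0), ∀ e, η ≤ S.a e ∧ η ≤ S.b e :=
    eventually_all.2 fun e => eventually_nhdsWithin_of_eventually_nhds
      ((eventually_le_nhds (S.a_mem e).1).and (eventually_le_nhds (S.b_mem e).1))
  have h2 : ∀ᶠ r : ℝ in nhdsWithin 1 (Iio 1), ∀ e, S.a e ≤ r ∧ S.b e ≤ r :=
    eventually_all.2 fun e => eventually_nhdsWithin_of_eventually_nhds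
      ((eventually_ge_nhds (S.a_mem e).2).and (eventually_ge_nhds (S.b_mem e).2))
  obtain ⟨η, hη, hη0, hη1⟩ := (h1.and (Ioo_mem_nhdsGT one_pos)).exists
  obtain ⟨r, hr, hr0, hr1⟩ := (h2.and (Ioo_mem_nhdsLT one_pos)).exists
  exact ⟨η, r, hη0, hη1, hr0, hr1, fun e => ⟨(hη e).1, (hη e).2, (hr e).1, (hr e).2⟩⟩

lemma sum_ite_eq_sum_subtype {M : Type*} [AddCommMonoid M] [Fintype E] (P : E → Prop)
    (f : E → M) : (∑ e, if P e then f e else 0) = ∑ e : {e // P e}, f e := by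
  rw [← Finset.sum_filter]
  exact Finset.sum_subtype _ (by simp) f

lemma IsWeights.sum_subtype [Fintype E] {S : BoxLikeGIFS V E} {p : E → ℝ} (hp : S.IsWeights p) (v : V) :
    ∑ e : {e // S.init e = v}, p e = 1 := by
  rw [← sum_ite_eq_sum_subtype (fun e => S.init e = v) p]
  exact hp.2 v

lemma IsGDMeasure.real_apply [Fintype E] {S : BoxLikeGIFS V E} (hdiag : ∀ e : E, S.diag e = true)
    {p : E → ℝ} (hp : S.IsWeights p) {μ : V → Measure (ℝ × ℝ)} (hμ : S.IsGDMeasure p μ)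
    (v : V) {A : Set (ℝ × ℝ)} (hA : MeasurableSet A) :
    (μ v).real A = ∑ e : {e // S.init e = v},
      p e * (μ (S.term e)).real ((S.edgeCell p e).map ⁻¹' A) := by
  have := hμ.1
  have h : μ v A = ∑ e : {e // S.init e = v},
      ENNReal.ofReal (p e) * μ (S.term e) ((S.edgeCell p e).map ⁻¹' A) := by
    conv_lhs => rw [hμ.2 v]
    rw [sum_ite_eq_sum_subtype (fun e => S.init e = v), Measure.finsetSum_apply]
    refine Finset.sum_congr rfl fun e _ => ?_
    rw [← S.map_edgeCell p (hdiag e), Measure.smul_apply,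
      Measure.map_apply (Cell.continuous_map _).measurable hA, smul_eq_mul]
  rw [Measure.real, h, ENNReal.toReal_sum fun e _ =>
    ENNReal.mul_ne_top ENNReal.ofReal_ne_top (measure_ne_top _ _)]
  refine Finset.sum_congr rfl fun e _ => ?_
  rw [ENNReal.toReal_mul, ENNReal.toReal_ofReal (hp.1 e).le, Measure.real]

lemma closure_unitSq : closure unitSq = closedSq := by
  simp [unitSq, closedSq, closure_prod_eq, closure_Ioo]

lemma mapsTo_closedSq {w : Cell V} (h : w.map '' unitSq ⊆ unitSq) {z : ℝ × ℝ}
    (hz : z ∈ closedSq) : w.map z ∈ closedSq := by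
  rw [← closure_unitSq] at hz ⊢
  exact closure_mono h (image_closure_subset_closure_image w.continuous_map (mem_image_of_mem _ hz))

lemma infDist_edgeCell_le {S : BoxLikeGIFS V E} {p : E → ℝ} {e : E} {r : ℝ}
    (h : (S.edgeCell p e).map '' unitSq ⊆ unitSq) (ha : S.a e ≤ r) (hb : S.b e ≤ r) (z : ℝ × ℝ) :
    Metric.infDist ((S.edgeCell p e).map z) closedSq ≤ r * Metric.infDist z closedSq := by
  have hK : IsCompact closedSq := isCompact_Icc.prod isCompact_Icc
  obtain ⟨y, hy, hzy⟩ := hK.exists_infDist_eq_dist ⟨((0 : ℝ), (0 : ℝ)), by simp [closedSq]⟩ z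
  refine (Metric.infDist_le_dist_of_mem (mapsTo_closedSq h hy)).trans ?_
  rw [hzy, Prod.dist_eq, Prod.dist_eq]
  have h1 : dist ((S.edgeCell p e).map z).1 ((S.edgeCell p e).map y).1 = S.a e * dist z.1 y.1 := by
    rw [← S.abs_sx_edgeCell p e, Real.dist_eq, Real.dist_eq, ← abs_mul]
    congr 1
    simp only [Cell.map]
    ring
  have h2 : dist ((S.edgeCell p e).map z).2 ((S.edgeCell p e).map y).2 = S.b e * dist z.2 y.2 := by
    rw [← S.abs_sy_edgeCell p e, Real.dist_eq, Real.dist_eq, ← abs_mul]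
    congr 1
    simp only [Cell.map]
    ring
  rw [h1, h2]
  have hr : 0 ≤ r := (S.a_mem e).1.le.trans ha
  exact max_le (mul_le_mul ha (le_max_left _ _) dist_nonneg hr)
    (mul_le_mul hb (le_max_right _ _) dist_nonneg hr)

/-- The measures of the family live on the closed unit square. -/
lemma IsGDMeasure.measure_compl_closedSq [Fintype E] [Finite V] {S : BoxLikeGIFS V E}
    (hdiag : ∀ e : E, S.diag e = true) (hROSC : S.ROSC)
    {p : E → ℝ} (hp : S.IsWeights p) {μ : V → Measure (ℝ × ℝ)} (hμ : S.IsGDMeasure p μ) (v : V) :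
    μ v closedSqᶜ = 0 := by
  have := hμ.1
  obtain ⟨_, r, _, _, hr0, hr1, hr⟩ := S.exists_ratio_bounds
  set A : ℝ → Set (ℝ × ℝ) := fun t => {z | t < Metric.infDist z closedSq} with hA
  have hAm : ∀ t, MeasurableSet (A t) := fun t =>
    measurableSet_lt measurable_const (Metric.continuous_infDist_pt _).measurable
  have hstep : ∀ (m t : ℝ), (∀ u, (μ u).real (A (t / r)) ≤ m) → ∀ u, (μ u).real (A t) ≤ m := by
    intro m t hm u
    rw [hμ.real_apply hdiag hp u (hAm t)]
    calc _ ≤ ∑ e : {e // S.init e = u}, p e * m := by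
          refine Finset.sum_le_sum fun e _ => mul_le_mul_of_nonneg_left ?_ (hp.1 e).le
          refine (measureReal_mono ?_).trans (hm (S.term e))
          intro z (hz : t < _)
          have hz' := infDist_edgeCell_le (S := S) (p := p) (e := e)
            (by rw [S.map_edgeCell p (hdiag e)]; exact hROSC.1 e) (hr e).2.2.1 (hr e).2.2.2 z
          exact (div_lt_iff₀' hr0).2 (hz.trans_le hz')
      _ = m := by rw [← Finset.sum_mul, hp.sum_subtype, one_mul]
  have hiter : ∀ (n : ℕ) (m t : ℝ), (∀ u, (μ u).real (A (t / r ^ n)) ≤ m) →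
      ∀ u, (μ u).real (A t) ≤ m := by
    intro n
    induction n with
    | zero => intro m t h; simpa using h
    | succ n ih =>
      intro m t h
      refine hstep m t (ih m (t / r) fun u => ?_)
      rw [div_div, ← pow_succ']
      exact h u
  have hzero : ∀ u, Tendsto (fun t => (μ u).real (A t)) atTop (nhds 0) := by
    intro u
    have hanti : Antitone A := fun s t hst z (hz : t < _) => (hst.trans_lt hz : s < _)
    have h0 := tendsto_measure_iInter_atTop (μ := μ u) (fun t => (hAm t).nullMeasurableSet) hanti
      ⟨0, measure_ne_top _ _⟩
    have hempty : ⋂ t, A t = ∅ := by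
      refine eq_empty_of_forall_notMem fun z hz => ?_
      have h : Metric.infDist z closedSq < Metric.infDist z closedSq := mem_iInter.1 hz _
      exact lt_irrefl _ h
    rw [hempty, measure_empty] at h0
    exact (ENNReal.tendsto_toReal ENNReal.zero_ne_top).comp h0
  have hnull : ∀ t > 0, (μ v).real (A t) = 0 := by
    intro t ht
    refine le_antisymm (le_of_forall_pos_le_add fun ε hε => ?_) measureReal_nonneg
    rw [zero_add]
    have h1 : ∀ᶠ s in atTop, ∀ u, (μ u).real (A s) ≤ ε :=
      eventually_all.2 fun u => ((hzero u).eventually_lt_const hε).mono fun _ h => h.le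
    have h2 : Tendsto (fun n : ℕ => t / r ^ n) atTop atTop := by
      simp only [div_eq_mul_inv, ← inv_pow]
      exact (tendsto_pow_atTop_atTop_of_one_lt ((one_lt_inv₀ hr0).2 hr1)).const_mul_atTop ht
    obtain ⟨n, hn⟩ := (h2.eventually h1).exists
    exact hiter n ε t hn v
  have hcover : closedSqᶜ ⊆ ⋃ n : ℕ, A (1 / ((n : ℝ) + 1)) := by
    intro z hz
    have hcl : IsClosed closedSq := isClosed_Icc.prod isClosed_Icc
    have hpos := (hcl.notMem_iff_infDist_pos ⟨((0 : ℝ), (0 : ℝ)), by simp [closedSq]⟩).1 hz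
    obtain ⟨n, hn⟩ := exists_nat_one_div_lt hpos
    exact mem_iUnion.2 ⟨n, hn⟩
  refine measure_mono_null hcover (measure_iUnion_null fun n => ?_)
  exact (measureReal_eq_zero_iff).1 (hnull _ Nat.one_div_pos_of_nat)

/-! ### The transfer operator and cut sets -/

/-- The weight `p_e^q a_e^x b_e^y`. -/
noncomputable def wt (S : BoxLikeGIFS V E) (p : E → ℝ) (q x y : ℝ) (e : E) : ℝ :=
  p e ^ q * S.a e ^ x * S.b e ^ y

/-- The transfer operator on functions on the vertices. -/
noncomputable def transfer [Fintype E] (S : BoxLikeGIFS V E) (p : E → ℝ) (q x y : ℝ)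
    (h : V → ℝ) (v : V) : ℝ :=
  ∑ e : {e // S.init e = v}, S.wt p q x y e * h (S.term e)

/-- A family of cells obtained from the vertex `v` by subdividing until the shorter side of
the rectangle, of initial size `c × d`, is comparable to `δ`. -/
structure IsCut [Fintype E] (S : BoxLikeGIFS V E) (p : E → ℝ) (μ : V → Measure (ℝ × ℝ)) (η δ c d : ℝ)
    (v : V) {ι : Type} [Fintype ι] (w : ι → Cell V) : Prop where
  prob_pos : ∀ i, 0 < (w i).prob
  sx_ne : ∀ i, (w i).sx ≠ 0
  sy_ne : ∀ i, (w i).sy ≠ 0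
  sx_le : ∀ i, |(w i).sx| ≤ 1
  sy_le : ∀ i, |(w i).sy| ≤ 1
  inside : ∀ i, (w i).map '' unitSq ⊆ unitSq
  disj : ∀ i j, i ≠ j → Disjoint ((w i).map '' unitSq) ((w j).map '' unitSq)
  real_apply : ∀ A, MeasurableSet A →
    (μ v).real A = ∑ i, (w i).prob * (μ (w i).vert).real ((w i).map ⁻¹' A)
  lower : ∀ i, η * δ ≤ min (c * |(w i).sx|) (d * |(w i).sy|)
  upper : ∀ i, min (c * |(w i).sx|) (d * |(w i).sy|) ≤ δ
  sub : ∀ (q x y : ℝ) (h : V → ℝ), (∀ u, S.transfer p q x y h u ≤ h u) →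
    ∑ i, (w i).prob ^ q * |(w i).sx| ^ x * |(w i).sy| ^ y * h (w i).vert ≤ h v
  super : ∀ (q x y : ℝ) (h : V → ℝ), (∀ u, h u ≤ S.transfer p q x y h u) →
    h v ≤ ∑ i, (w i).prob ^ q * |(w i).sx| ^ x * |(w i).sy| ^ y * h (w i).vert

lemma isCut_one [Fintype E] (S : BoxLikeGIFS V E) (p : E → ℝ) (μ : V → Measure (ℝ × ℝ)) {η δ c d : ℝ}
    (v : V) (hlow : η * δ ≤ min c d) (hup : min c d ≤ δ) :
    S.IsCut p μ η δ c d v (fun _ : Unit => Cell.one v) where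
  prob_pos _ := one_pos
  sx_ne _ := one_ne_zero
  sy_ne _ := one_ne_zero
  sx_le _ := by simp [Cell.one]
  sy_le _ := by simp [Cell.one]
  inside _ := by simp [Cell.map_one]
  disj i j hij := absurd (Subsingleton.elim i j) hij
  real_apply A _ := by simp [Cell.map_one]; simp [Cell.one]
  lower _ := by simpa [Cell.one] using hlow
  upper _ := by simpa [Cell.one] using hup
  sub q x y h _ := by simp [Cell.one]
  super q x y h _ := by simp [Cell.one]

lemma wt_mul_rpow (S : BoxLikeGIFS V E) {p : E → ℝ} (hp : ∀ e, 0 < p e) {w : Cell V}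
    (hw : 0 < w.prob) (e : E) (q x y t : ℝ) :
    ((S.edgeCell p e).comp w).prob ^ q * |((S.edgeCell p e).comp w).sx| ^ x *
      |((S.edgeCell p e).comp w).sy| ^ y * t =
    S.wt p q x y e * (w.prob ^ q * |w.sx| ^ x * |w.sy| ^ y * t) := by
  have h1 : |((S.edgeCell p e).comp w).sx| = S.a e * |w.sx| := by
    rw [← S.abs_sx_edgeCell p e, ← abs_mul]
    rfl
  have h2 : |((S.edgeCell p e).comp w).sy| = S.b e * |w.sy| := by
    rw [← S.abs_sy_edgeCell p e, ← abs_mul]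
    rfl
  have h3 : ((S.edgeCell p e).comp w).prob = p e * w.prob := rfl
  rw [h1, h2, h3, Real.mul_rpow (hp e).le hw.le, Real.mul_rpow (S.a_mem e).1.le (abs_nonneg _),
    Real.mul_rpow (S.b_mem e).1.le (abs_nonneg _), wt]
  ring

lemma wt_pos (S : BoxLikeGIFS V E) {p : E → ℝ} (hp : ∀ e, 0 < p e) (q x y : ℝ) (e : E) :
    0 < S.wt p q x y e := by
  have := hp e
  have := (S.a_mem e).1
  have := (S.b_mem e).1
  unfold wt
  positivity

/-- Subdividing once: cuts for the successors of `v` combine to a cut for `v`. -/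
lemma isCut_sigma [Fintype E] {S : BoxLikeGIFS V E} (hdiag : ∀ e : E, S.diag e = true) (hROSC : S.ROSC)
    {p : E → ℝ} (hp : S.IsWeights p) {μ : V → Measure (ℝ × ℝ)} (hμ : S.IsGDMeasure p μ)
    {η δ c d : ℝ} {v : V}
    {ι : {e // S.init e = v} → Type} [∀ e, Fintype (ι e)] {w : ∀ e : {e // S.init e = v}, ι e → Cell V}
    (hw : ∀ e : {e // S.init e = v}, S.IsCut p μ η δ (c * S.a e) (d * S.b e) (S.term e) (w e)) :
    S.IsCut p μ η δ c d v
      (fun k : Σ e, ι e => (S.edgeCell p k.1).comp (w k.1 k.2)) := by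
  have hsx : ∀ e : E, (S.edgeCell p e).sx ≠ 0 := fun e => by
    rw [← abs_pos, abs_sx_edgeCell]
    exact (S.a_mem e).1
  have hsy : ∀ e : E, (S.edgeCell p e).sy ≠ 0 := fun e => by
    rw [← abs_pos, abs_sy_edgeCell]
    exact (S.b_mem e).1
  have h1 : ∀ (e : E) (w : Cell V), |((S.edgeCell p e).comp w).sx| = S.a e * |w.sx| := by
    intro e w
    rw [← S.abs_sx_edgeCell p e, ← abs_mul]
    rfl
  have h2 : ∀ (e : E) (w : Cell V), |((S.edgeCell p e).comp w).sy| = S.b e * |w.sy| := by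
    intro e w
    rw [← S.abs_sy_edgeCell p e, ← abs_mul]
    rfl
  have hin : ∀ e : E, (S.edgeCell p e).map '' unitSq ⊆ unitSq := fun e => by
    rw [S.map_edgeCell p (hdiag e)]
    exact hROSC.1 e
  refine ⟨?_, ?_, ?_, ?_, ?_, ?_, ?_, ?_, ?_, ?_, ?_, ?_⟩
  · rintro ⟨e, i⟩
    exact mul_pos (hp.1 e) ((hw e).prob_pos i)
  · rintro ⟨e, i⟩
    exact mul_ne_zero (hsx e) ((hw e).sx_ne i)
  · rintro ⟨e, i⟩
    exact mul_ne_zero (hsy e) ((hw e).sy_ne i)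
  · rintro ⟨e, i⟩
    rw [h1]
    exact mul_le_one₀ (S.a_mem e).2.le (abs_nonneg _) ((hw e).sx_le i)
  · rintro ⟨e, i⟩
    rw [h2]
    exact mul_le_one₀ (S.b_mem e).2.le (abs_nonneg _) ((hw e).sy_le i)
  · rintro ⟨e, i⟩
    rw [Cell.map_comp, image_comp]
    exact (image_mono ((hw e).inside i)).trans (hin e)
  · rintro ⟨e, i⟩ ⟨e', i'⟩ hne
    simp only [Cell.map_comp, image_comp]
    by_cases hee : e = e'
    · subst hee
      rw [disjoint_image_iff (Cell.map_injective (hsx e) (hsy e))]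
      exact (hw e).disj i i' fun h => hne (by rw [h])
    · have := hROSC.2 e e' (fun h => hee (Subtype.ext h)) (e.2.trans e'.2.symm)
      rw [← S.map_edgeCell p (hdiag e), ← S.map_edgeCell p (hdiag e')] at this
      exact this.mono (image_mono ((hw e).inside i)) (image_mono ((hw e').inside i'))
  · intro A hA
    rw [hμ.real_apply hdiag hp v hA, Fintype.sum_sigma]
    refine Finset.sum_congr rfl fun e _ => ?_
    rw [(hw e).real_apply _ ((Cell.continuous_map _).measurable hA), Finset.mul_sum]
    refine Finset.sum_congr rfl fun i _ => ?_
    rw [Cell.map_comp, preimage_comp, ← mul_assoc]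
    rfl
  · rintro ⟨e, i⟩
    rw [h1, h2, ← mul_assoc, ← mul_assoc]
    exact (hw e).lower i
  · rintro ⟨e, i⟩
    rw [h1, h2, ← mul_assoc, ← mul_assoc]
    exact (hw e).upper i
  · intro q x y h hh
    refine le_trans ?_ (hh v)
    rw [Fintype.sum_sigma, transfer]
    refine Finset.sum_le_sum fun e _ => ?_
    simp only [S.wt_mul_rpow hp.1 ((hw e).prob_pos _), ← Finset.mul_sum]
    exact mul_le_mul_of_nonneg_left ((hw e).sub q x y h hh) (S.wt_pos hp.1 q x y e).le
  · intro q x y h hh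
    refine (hh v).trans ?_
    rw [Fintype.sum_sigma, transfer]
    refine Finset.sum_le_sum fun e _ => ?_
    simp only [S.wt_mul_rpow hp.1 ((hw e).prob_pos _), ← Finset.mul_sum]
    exact mul_le_mul_of_nonneg_left ((hw e).super q x y h hh) (S.wt_pos hp.1 q x y e).le

lemma exists_isCut_aux [Fintype E] {S : BoxLikeGIFS V E} (hdiag : ∀ e : E, S.diag e = true) (hROSC : S.ROSC)
    {p : E → ℝ} (hp : S.IsWeights p) {μ : V → Measure (ℝ × ℝ)} (hμ : S.IsGDMeasure p μ)
    {η r δ : ℝ} (hη : 0 < η) (hr : ∀ e, η ≤ S.a e ∧ η ≤ S.b e ∧ S.a e ≤ r ∧ S.b e ≤ r)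
    (n : ℕ) (v : V) {c d : ℝ} (hc : 0 < c) (hd : 0 < d) (hlow : η * δ ≤ min c d)
    (hn : r ^ n * min c d ≤ δ) :
    ∃ (ι : Type) (_ : Fintype ι) (w : ι → Cell V), S.IsCut p μ η δ c d v w := by
  induction n generalizing v c d with
  | zero => exact ⟨Unit, inferInstance, _, S.isCut_one p μ v hlow (by simpa using hn)⟩
  | succ n ih =>
    rcases le_or_gt (min c d) δ with hle | hgt
    · exact ⟨Unit, inferInstance, _, S.isCut_one p μ v hlow hle⟩
    · have hm : 0 < min c d := lt_min hc hd
      have hchild : ∀ e : {e // S.init e = v}, ∃ (ι : Type) (_ : Fintype ι) (w : ι → Cell V),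
          S.IsCut p μ η δ (c * S.a e) (d * S.b e) (S.term e) w := by
        intro e
        obtain ⟨ha, hb, har, hbr⟩ := hr e
        have hr0 : 0 < r := (hη.trans_le ha).trans_le har
        refine ih (S.term e) (mul_pos hc (S.a_mem e).1) (mul_pos hd (S.b_mem e).1) ?_ ?_
        · refine le_min ?_ ?_
          · have := min_le_left c d
            nlinarith
          · have := min_le_right c d
            nlinarith
        · refine le_trans ?_ hn
          rw [pow_succ, mul_assoc]
          refine mul_le_mul_of_nonneg_left ?_ (pow_nonneg hr0.le n)
          rcases min_choice c d with h | h <;> rw [h]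
          · exact (min_le_left _ _).trans (by nlinarith)
          · exact (min_le_right _ _).trans (by nlinarith)
      choose ι inst w hw using hchild
      exact ⟨Σ e, ι e, inferInstance, _, isCut_sigma hdiag hROSC hp hμ hw⟩

/-- Cuts exist at every scale below one. -/
lemma exists_isCut [Fintype E] {S : BoxLikeGIFS V E} (hdiag : ∀ e : E, S.diag e = true) (hROSC : S.ROSC)
    {p : E → ℝ} (hp : S.IsWeights p) {μ : V → Measure (ℝ × ℝ)} (hμ : S.IsGDMeasure p μ)
    {η r δ : ℝ} (hη : 0 < η) (hη1 : η < 1) (hr1 : r < 1)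
    (hr : ∀ e, η ≤ S.a e ∧ η ≤ S.b e ∧ S.a e ≤ r ∧ S.b e ≤ r) (hδ : δ ∈ Ioo (0 : ℝ) 1) (v : V) :
    ∃ (ι : Type) (_ : Fintype ι) (w : ι → Cell V), S.IsCut p μ η δ 1 1 v w := by
  obtain ⟨n, hn⟩ := exists_pow_lt_of_lt_one hδ.1 hr1
  refine exists_isCut_aux hdiag hROSC hp hμ hη hr n v one_pos one_pos ?_ ?_
  · rw [min_self]
    nlinarith [hδ.1, hδ.2]
  · rw [min_self, mul_one]
    exact hn.le

end BoxLikeGIFS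

/-- Hölder's inequality for finite sums of positive reals, in weighted form. -/
lemma sum_rpow_mul_rpow_le {ι : Type*} (s : Finset ι) (f g : ι → ℝ) (hf : ∀ i ∈ s, 0 < f i)
    (hg : ∀ i ∈ s, 0 < g i) {θ₀ θ₁ : ℝ} (h₀ : 0 ≤ θ₀) (h₁ : 0 ≤ θ₁) (hθ : θ₀ + θ₁ = 1) :
    ∑ i ∈ s, f i ^ θ₀ * g i ^ θ₁ ≤ (∑ i ∈ s, f i) ^ θ₀ * (∑ i ∈ s, g i) ^ θ₁ := by
  rcases s.eq_empty_or_nonempty with rfl | hs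
  · simp only [Finset.sum_empty]
    positivity
  have hF := Finset.sum_pos hf hs
  have hG := Finset.sum_pos hg hs
  set F := ∑ i ∈ s, f i with hFdef
  set G := ∑ i ∈ s, g i with hGdef
  have key : ∀ i ∈ s, f i ^ θ₀ * g i ^ θ₁ ≤
      F ^ θ₀ * G ^ θ₁ * (θ₀ * (f i / F) + θ₁ * (g i / G)) := by
    intro i hi
    have h := Real.geom_mean_le_arith_mean2_weighted h₀ h₁ (div_nonneg (hf i hi).le hF.le)
      (div_nonneg (hg i hi).le hG.le) hθ
    rw [Real.div_rpow (hf i hi).le hF.le, Real.div_rpow (hg i hi).le hG.le] at h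
    have hFp := Real.rpow_pos_of_pos hF θ₀
    have hGp := Real.rpow_pos_of_pos hG θ₁
    calc f i ^ θ₀ * g i ^ θ₁ = F ^ θ₀ * G ^ θ₁ * (f i ^ θ₀ / F ^ θ₀ * (g i ^ θ₁ / G ^ θ₁)) := by
          field_simp
      _ ≤ _ := mul_le_mul_of_nonneg_left h (by positivity)
  refine (Finset.sum_le_sum key).trans_eq ?_
  rw [← Finset.mul_sum, Finset.sum_add_distrib, ← Finset.mul_sum, ← Finset.mul_sum,
    ← Finset.sum_div, ← Finset.sum_div, ← hFdef, ← hGdef, div_self hF.ne', div_self hG.ne',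
    mul_one, mul_one, hθ, mul_one]

namespace BoxLikeGIFS

lemma StronglyConnected.exists_term_eq {V E : Type} {S : BoxLikeGIFS V E} (hSC : S.StronglyConnected)
    (v : V) : ∃ e, S.term e = v := by
  rcases Relation.transGen_iff _ _ _ |>.1 (hSC v v) with ⟨e, _, h⟩ | ⟨_, _, e, _, h⟩
  exacts [⟨e, h⟩, ⟨e, h⟩]

variable {V E : Type} [Fintype E]

/-! ### Path sums and the spectral radius -/

/-- The sum of the weights of all paths of length `k` starting at a vertex. -/
noncomputable def pathSum (S : BoxLikeGIFS V E) (p : E → ℝ) (q x y : ℝ) (k : ℕ) : V → ℝ :=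
  (S.transfer p q x y)^[k] fun _ => 1

lemma pathSum_zero (S : BoxLikeGIFS V E) (p : E → ℝ) (q x y : ℝ) (v : V) :
    S.pathSum p q x y 0 v = 1 := rfl

lemma pathSum_succ (S : BoxLikeGIFS V E) (p : E → ℝ) (q x y : ℝ) (k : ℕ) (v : V) :
    S.pathSum p q x y (k + 1) v =
      ∑ e : {e // S.init e = v}, S.wt p q x y e * S.pathSum p q x y k (S.term e) := by
  simp only [pathSum, Function.iterate_succ_apply']
  rfl

lemma pathSum_pos (S : BoxLikeGIFS V E) {p : E → ℝ} (hp : ∀ e, 0 < p e) (q x y : ℝ) (k : ℕ)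
    (v : V) : 0 < S.pathSum p q x y k v := by
  induction k generalizing v with
  | zero => exact one_pos
  | succ k ih =>
    rw [pathSum_succ]
    obtain ⟨e, he⟩ := S.edge_exists v
    exact Finset.sum_pos (fun e _ => mul_pos (S.wt_pos hp q x y e) (ih _))
      ⟨⟨e, he⟩, Finset.mem_univ _⟩

lemma Fmat_pow_nonneg (S : BoxLikeGIFS V E) {p : E → ℝ} (hp : ∀ e, 0 < p e) (q x y : ℝ) (k : ℕ)
    (e e' : E) : 0 ≤ (S.Fmat p q x y ^ k) e e' := by
  induction k generalizing e with
  | zero => rw [pow_zero, Matrix.one_apply]; split_ifs <;> norm_num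
  | succ k ih =>
    rw [pow_succ', Matrix.mul_apply]
    refine Finset.sum_nonneg fun j _ => mul_nonneg ?_ (ih j)
    unfold Fmat FmatG
    split_ifs
    · exact (S.wt_pos hp q x y j).le
    · exact le_rfl

lemma sum_Fmat_pow (S : BoxLikeGIFS V E) (p : E → ℝ) (q x y : ℝ) (k : ℕ) (e : E) :
    ∑ e', (S.Fmat p q x y ^ k) e e' = S.pathSum p q x y k (S.term e) := by
  induction k generalizing e with
  | zero => simp [Matrix.one_apply, pathSum_zero]
  | succ k ih =>
    simp only [pow_succ', Matrix.mul_apply]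
    rw [Finset.sum_comm]
    simp only [← Finset.mul_sum, ih]
    rw [pathSum_succ, ← sum_ite_eq_sum_subtype (fun e' => S.init e' = S.term e)
      (fun e' => S.wt p q x y e' * S.pathSum p q x y k (S.term e'))]
    refine Finset.sum_congr rfl fun j _ => ?_
    simp only [Fmat, FmatG, ite_mul, zero_mul, eq_comm (a := S.term e)]
    rfl

/-- The total path sum, which is the norm of the `k`-th power of the matrix. -/
noncomputable def totalSum (S : BoxLikeGIFS V E) (p : E → ℝ) (q x y : ℝ) (k : ℕ) : ℝ :=
  ∑ e, S.pathSum p q x y k (S.term e)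

lemma mnorm_Fmat_pow (S : BoxLikeGIFS V E) {p : E → ℝ} (hp : ∀ e, 0 < p e) (q x y : ℝ) (k : ℕ) :
    mnorm (S.Fmat p q x y ^ k) = S.totalSum p q x y k := by
  unfold mnorm totalSum
  refine Finset.sum_congr rfl fun e _ => ?_
  rw [← sum_Fmat_pow]
  exact Finset.sum_congr rfl fun e' _ => abs_of_nonneg (S.Fmat_pow_nonneg hp q x y k e e')

lemma totalSum_nonneg (S : BoxLikeGIFS V E) {p : E → ℝ} (hp : ∀ e, 0 < p e) (q x y : ℝ) (k : ℕ) :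
    0 ≤ S.totalSum p q x y k :=
  Finset.sum_nonneg fun _ _ => (S.pathSum_pos hp q x y k _).le

lemma specRad_Fmat (S : BoxLikeGIFS V E) {p : E → ℝ} (hp : ∀ e, 0 < p e) (q x y : ℝ) :
    specRad (S.Fmat p q x y) =
      limsup (fun k : ℕ => S.totalSum p q x y k ^ ((k : ℝ)⁻¹)) atTop := by
  simp only [specRad, S.mnorm_Fmat_pow hp]

lemma exists_totalSum_le (S : BoxLikeGIFS V E) {p : E → ℝ} (hp : ∀ e, 0 < p e) (q x y : ℝ) :
    ∃ C : ℝ, 0 ≤ C ∧ ∀ k ≠ 0, S.totalSum p q x y k ≤ C ^ k := by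
  set W := ∑ e, S.wt p q x y e with hW
  have hwt : ∀ e, 0 ≤ S.wt p q x y e := fun e => (S.wt_pos hp q x y e).le
  have hW0 : 0 ≤ W := Finset.sum_nonneg fun e _ => hwt e
  have h1 : ∀ k v, S.pathSum p q x y k v ≤ W ^ k := by
    intro k
    induction k with
    | zero => intro v; simp [pathSum_zero]
    | succ k ih =>
      intro v
      rw [pathSum_succ, ← sum_ite_eq_sum_subtype (fun e => S.init e = v)
        (fun e => S.wt p q x y e * S.pathSum p q x y k (S.term e)), pow_succ', hW, Finset.sum_mul]
      refine Finset.sum_le_sum fun e _ => ?_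
      have h := mul_le_mul_of_nonneg_left (ih (S.term e)) (hwt e)
      split_ifs
      · exact h
      · exact mul_nonneg (hwt e) (pow_nonneg hW0 k)
  refine ⟨max 1 (Fintype.card E : ℝ) * W, by positivity, fun k hk => ?_⟩
  calc S.totalSum p q x y k ≤ Fintype.card E * W ^ k := by
        refine (Finset.sum_le_card_nsmul _ _ _ fun e _ => h1 k _).trans_eq ?_
        simp
    _ ≤ max 1 (Fintype.card E : ℝ) ^ k * W ^ k := by
        refine mul_le_mul_of_nonneg_right ?_ (pow_nonneg hW0 k)
        exact (le_max_right _ _).trans (le_self_pow₀ (le_max_left _ _) hk)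
    _ = _ := (mul_pow _ _ _).symm

lemma isBoundedUnder_totalSum (S : BoxLikeGIFS V E) {p : E → ℝ} (hp : ∀ e, 0 < p e) (q x y : ℝ) :
    IsBoundedUnder (· ≤ ·) atTop (fun k : ℕ => S.totalSum p q x y k ^ ((k : ℝ)⁻¹)) := by
  obtain ⟨C, hC0, hC⟩ := S.exists_totalSum_le hp q x y
  refine ⟨C, eventually_map.2 ?_⟩
  filter_upwards [eventually_ne_atTop 0] with k hk
  rw [← Real.pow_rpow_inv_natCast hC0 hk]
  exact Real.rpow_le_rpow (S.totalSum_nonneg hp q x y k) (hC k hk) (by positivity)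

lemma isCoboundedUnder_totalSum (S : BoxLikeGIFS V E) {p : E → ℝ} (hp : ∀ e, 0 < p e)
    (q x y : ℝ) :
    IsCoboundedUnder (· ≤ ·) atTop (fun k : ℕ => S.totalSum p q x y k ^ ((k : ℝ)⁻¹)) :=
  IsBoundedUnder.isCoboundedUnder_le
    ⟨0, eventually_map.2 (Eventually.of_forall fun k =>
      Real.rpow_nonneg (S.totalSum_nonneg hp q x y k) _)⟩

lemma eventually_totalSum_le (S : BoxLikeGIFS V E) {p : E → ℝ} (hp : ∀ e, 0 < p e) {q x y R : ℝ}
    (h : specRad (S.Fmat p q x y) < R) : ∀ᶠ k in atTop, S.totalSum p q x y k ≤ R ^ k := by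
  rw [S.specRad_Fmat hp] at h
  filter_upwards [eventually_lt_of_limsup_lt h (S.isBoundedUnder_totalSum hp q x y),
    eventually_ne_atTop 0] with k hk hk0
  have h0 := S.totalSum_nonneg hp q x y k
  rw [← Real.rpow_inv_natCast_pow h0 hk0]
  exact pow_le_pow_left₀ (Real.rpow_nonneg h0 _) hk.le k

lemma frequently_le_totalSum (S : BoxLikeGIFS V E) {p : E → ℝ} (hp : ∀ e, 0 < p e) {q x y R : ℝ}
    (hR : 0 ≤ R) (h : R < specRad (S.Fmat p q x y)) :
    ∃ᶠ k in atTop, R ^ k ≤ S.totalSum p q x y k := by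
  rw [S.specRad_Fmat hp] at h
  refine ((frequently_lt_of_lt_limsup (S.isCoboundedUnder_totalSum hp q x y) h).and_eventually
    (eventually_ne_atTop 0)).mono fun k hk => ?_
  have h0 := S.totalSum_nonneg hp q x y k
  rw [← Real.rpow_inv_natCast_pow h0 hk.2]
  exact pow_le_pow_left₀ hR hk.1.le k

lemma specRad_le (S : BoxLikeGIFS V E) {p : E → ℝ} (hp : ∀ e, 0 < p e) {q x y R : ℝ}
    (hR : 0 ≤ R) (h : ∀ᶠ k in atTop, S.totalSum p q x y k ≤ R ^ k) :
    specRad (S.Fmat p q x y) ≤ R := by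
  rw [S.specRad_Fmat hp]
  refine limsup_le_of_le (S.isCoboundedUnder_totalSum hp q x y) ?_
  filter_upwards [h, eventually_ne_atTop 0] with k hk hk0
  rw [← Real.pow_rpow_inv_natCast hR hk0]
  exact Real.rpow_le_rpow (S.totalSum_nonneg hp q x y k) hk (by positivity)

/-! ### Dependence on the exponents -/

lemma pathSum_add_le (S : BoxLikeGIFS V E) {p : E → ℝ} (hp : ∀ e, 0 < p e) {r : ℝ}
    (hr0 : 0 < r) (hr : ∀ e, S.a e ≤ r ∧ S.b e ≤ r) (q x y : ℝ) {s t : ℝ} (hs : 0 ≤ s) (ht : 0 ≤ t)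
    (k : ℕ) (v : V) :
    S.pathSum p q (x + s) (y + t) k v ≤ (r ^ (s + t)) ^ k * S.pathSum p q x y k v := by
  induction k generalizing v with
  | zero => simp [pathSum_zero]
  | succ k ih =>
    rw [pathSum_succ, pathSum_succ, Finset.mul_sum]
    refine Finset.sum_le_sum fun e _ => ?_
    have ha := (S.a_mem e).1
    have hb := (S.b_mem e).1
    have h1 : S.wt p q (x + s) (y + t) e ≤ r ^ (s + t) * S.wt p q x y e := by
      have h2 : S.a e ^ s * S.b e ^ t ≤ r ^ s * r ^ t := by
        have := Real.rpow_le_rpow ha.le (hr e).1 hs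
        have := Real.rpow_le_rpow hb.le (hr e).2 ht
        gcongr
      rw [Real.rpow_add hr0]
      calc S.wt p q (x + s) (y + t) e = (S.a e ^ s * S.b e ^ t) * S.wt p q x y e := by
            rw [wt, wt, Real.rpow_add ha, Real.rpow_add hb]
            ring
        _ ≤ _ := mul_le_mul_of_nonneg_right h2 (S.wt_pos hp q x y e).le
    calc _ ≤ (r ^ (s + t) * S.wt p q x y e) *
          ((r ^ (s + t)) ^ k * S.pathSum p q x y k (S.term e)) :=
          mul_le_mul h1 (ih _) (S.pathSum_pos hp _ _ _ _ _).le
            (mul_nonneg (Real.rpow_nonneg hr0.le _) (S.wt_pos hp q x y e).le)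
      _ = _ := by ring

lemma totalSum_add_le (S : BoxLikeGIFS V E) {p : E → ℝ} (hp : ∀ e, 0 < p e) {r : ℝ}
    (hr0 : 0 < r) (hr : ∀ e, S.a e ≤ r ∧ S.b e ≤ r) (q x y : ℝ) {s t : ℝ} (hs : 0 ≤ s) (ht : 0 ≤ t)
    (k : ℕ) :
    S.totalSum p q (x + s) (y + t) k ≤ (r ^ (s + t)) ^ k * S.totalSum p q x y k := by
  rw [totalSum, totalSum, Finset.mul_sum]
  exact Finset.sum_le_sum fun e _ => S.pathSum_add_le hp hr0 hr q x y hs ht k _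

lemma pathSum_logConvex (S : BoxLikeGIFS V E) {p : E → ℝ} (hp : ∀ e, 0 < p e)
    (q x₀ y₀ x₁ y₁ : ℝ) {θ₀ θ₁ : ℝ} (h₀ : 0 ≤ θ₀) (h₁ : 0 ≤ θ₁) (hθ : θ₀ + θ₁ = 1)
    (k : ℕ) (v : V) :
    S.pathSum p q (θ₀ * x₀ + θ₁ * x₁) (θ₀ * y₀ + θ₁ * y₁) k v ≤
      S.pathSum p q x₀ y₀ k v ^ θ₀ * S.pathSum p q x₁ y₁ k v ^ θ₁ := by
  induction k generalizing v with
  | zero => simp [pathSum_zero]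
  | succ k ih =>
    simp only [pathSum_succ]
    have hpos : ∀ (x y : ℝ) (e : E), 0 < S.wt p q x y e * S.pathSum p q x y k (S.term e) :=
      fun x y e => mul_pos (S.wt_pos hp q x y e) (S.pathSum_pos hp q x y k _)
    refine le_trans (Finset.sum_le_sum fun e _ => ?_)
      (sum_rpow_mul_rpow_le Finset.univ
        (fun e : {e // S.init e = v} => S.wt p q x₀ y₀ e * S.pathSum p q x₀ y₀ k (S.term e))
        (fun e => S.wt p q x₁ y₁ e * S.pathSum p q x₁ y₁ k (S.term e))
        (fun e _ => hpos x₀ y₀ e) (fun e _ => hpos x₁ y₁ e) h₀ h₁ hθ)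
    have ha := (S.a_mem e).1
    have hb := (S.b_mem e).1
    have hpe := hp e
    have hw : S.wt p q (θ₀ * x₀ + θ₁ * x₁) (θ₀ * y₀ + θ₁ * y₁) e =
        S.wt p q x₀ y₀ e ^ θ₀ * S.wt p q x₁ y₁ e ^ θ₁ := by
      have hq : p e ^ q = (p e ^ q) ^ θ₀ * (p e ^ q) ^ θ₁ := by
        rw [← Real.rpow_add (by positivity), hθ, Real.rpow_one]
      rw [wt, wt, wt, Real.mul_rpow (by positivity) (by positivity),
        Real.mul_rpow (by positivity) (by positivity), Real.mul_rpow (by positivity) (by positivity),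
        Real.mul_rpow (by positivity) (by positivity), Real.rpow_add ha, Real.rpow_add hb,
        mul_comm θ₀ x₀, mul_comm θ₁ x₁, mul_comm θ₀ y₀, mul_comm θ₁ y₁,
        Real.rpow_mul ha.le, Real.rpow_mul ha.le, Real.rpow_mul hb.le, Real.rpow_mul hb.le]
      conv_lhs => rw [hq]
      ring
    rw [hw, Real.mul_rpow (S.wt_pos hp _ _ _ _).le (S.pathSum_pos hp _ _ _ _ _).le,
      Real.mul_rpow (S.wt_pos hp _ _ _ _).le (S.pathSum_pos hp _ _ _ _ _).le]
    calc _ ≤ S.wt p q x₀ y₀ e ^ θ₀ * S.wt p q x₁ y₁ e ^ θ₁ *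
          (S.pathSum p q x₀ y₀ k (S.term e) ^ θ₀ * S.pathSum p q x₁ y₁ k (S.term e) ^ θ₁) :=
          mul_le_mul_of_nonneg_left (ih _)
            (mul_nonneg (Real.rpow_nonneg (S.wt_pos hp _ _ _ _).le _)
              (Real.rpow_nonneg (S.wt_pos hp _ _ _ _).le _))
      _ = _ := by ring

lemma totalSum_logConvex (S : BoxLikeGIFS V E) {p : E → ℝ} (hp : ∀ e, 0 < p e)
    (q x₀ y₀ x₁ y₁ : ℝ) {θ₀ θ₁ : ℝ} (h₀ : 0 ≤ θ₀) (h₁ : 0 ≤ θ₁) (hθ : θ₀ + θ₁ = 1) (k : ℕ) :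
    S.totalSum p q (θ₀ * x₀ + θ₁ * x₁) (θ₀ * y₀ + θ₁ * y₁) k ≤
      S.totalSum p q x₀ y₀ k ^ θ₀ * S.totalSum p q x₁ y₁ k ^ θ₁ :=
  (Finset.sum_le_sum fun _ _ => S.pathSum_logConvex hp q x₀ y₀ x₁ y₁ h₀ h₁ hθ k _).trans
    (sum_rpow_mul_rpow_le _ _ _ (fun _ _ => S.pathSum_pos hp _ _ _ _ _)
      (fun _ _ => S.pathSum_pos hp _ _ _ _ _) h₀ h₁ hθ)

/-- A point of the curve `ρ = 1` cannot lie strictly above a chord of the curve. -/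
lemma add_le_of_specRad_eq_one (S : BoxLikeGIFS V E) {p : E → ℝ} (hp : ∀ e, 0 < p e)
    {q x₀ y₀ x₁ y₁ x y θ₀ θ₁ : ℝ}
    (hρ₀ : specRad (S.Fmat p q x₀ y₀) = 1) (hρ₁ : specRad (S.Fmat p q x₁ y₁) = 1)
    (hρ : specRad (S.Fmat p q x y) = 1) (h₀ : 0 ≤ θ₀) (h₁ : 0 ≤ θ₁) (hθ : θ₀ + θ₁ = 1)
    (hx : θ₀ * x₀ + θ₁ * x₁ ≤ x) (hy : θ₀ * y₀ + θ₁ * y₁ ≤ y) :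
    x + y ≤ θ₀ * x₀ + θ₁ * x₁ + (θ₀ * y₀ + θ₁ * y₁) := by
  by_contra! hlt
  obtain ⟨_, r, _, _, hr0, hr1, hr⟩ := S.exists_ratio_bounds
  obtain ⟨s, hs⟩ : ∃ s, s = x - (θ₀ * x₀ + θ₁ * x₁) := ⟨_, rfl⟩
  obtain ⟨t, ht⟩ : ∃ t, t = y - (θ₀ * y₀ + θ₁ * y₁) := ⟨_, rfl⟩
  have hD : 0 < (s + t) / 2 := by linarith
  have hRlt : r ^ ((s + t) / 2) < 1 := Real.rpow_lt_one hr0.le hr1 hD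
  have hRpos : 0 < r ^ ((s + t) / 2) := Real.rpow_pos_of_pos hr0 _
  set ρ := r ^ ((s + t) / 2) with hρdef
  have hsq : r ^ (s + t) = ρ * ρ := by rw [hρdef, ← Real.rpow_add hr0, add_halves]
  have hinv : 1 < ρ⁻¹ := (one_lt_inv₀ hRpos).2 hRlt
  refine absurd (S.specRad_le hp (q := q) (x := x) (y := y) hRpos.le ?_) (by rw [hρ]; linarith)
  filter_upwards [S.eventually_totalSum_le hp (hρ₀.trans_lt hinv),
    S.eventually_totalSum_le hp (hρ₁.trans_lt hinv)] with k hk₀ hk₁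
  have hxy := S.totalSum_add_le hp hr0 (fun e => (hr e).2.2) q (θ₀ * x₀ + θ₁ * x₁)
    (θ₀ * y₀ + θ₁ * y₁) (s := s) (t := t) (by linarith) (by linarith) k
  rw [show θ₀ * x₀ + θ₁ * x₁ + s = x by linarith, show θ₀ * y₀ + θ₁ * y₁ + t = y by linarith] at hxy
  have hpw : 0 ≤ (ρ⁻¹) ^ k := by positivity
  calc S.totalSum p q x y k
      ≤ (r ^ (s + t)) ^ k * (S.totalSum p q x₀ y₀ k ^ θ₀ * S.totalSum p q x₁ y₁ k ^ θ₁) :=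
        hxy.trans (mul_le_mul_of_nonneg_left (S.totalSum_logConvex hp q x₀ y₀ x₁ y₁ h₀ h₁ hθ k)
          (pow_nonneg (Real.rpow_nonneg hr0.le _) k))
    _ ≤ (r ^ (s + t)) ^ k * (((ρ⁻¹) ^ k) ^ θ₀ * ((ρ⁻¹) ^ k) ^ θ₁) := by
        refine mul_le_mul_of_nonneg_left ?_ (pow_nonneg (Real.rpow_nonneg hr0.le _) k)
        exact mul_le_mul (Real.rpow_le_rpow (S.totalSum_nonneg hp _ _ _ _) hk₀ h₀)
          (Real.rpow_le_rpow (S.totalSum_nonneg hp _ _ _ _) hk₁ h₁)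
          (Real.rpow_nonneg (S.totalSum_nonneg hp _ _ _ _) _) (Real.rpow_nonneg hpw _)
    _ = ρ ^ k := by
        rw [← Real.rpow_add (by positivity), hθ, Real.rpow_one, hsq, ← mul_pow]
        congr 1
        field_simp

/-! ### Sub- and super-invariant functions -/

lemma transfer_sum_pathSum (S : BoxLikeGIFS V E) (p : E → ℝ) (q x y : ℝ) (n : ℕ) (v : V) :
    S.transfer p q x y (fun u => ∑ l ∈ Finset.range n, S.pathSum p q x y l u) v + 1 =
      (∑ l ∈ Finset.range n, S.pathSum p q x y l v) + S.pathSum p q x y n v := by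
  rw [← Finset.sum_range_succ, Finset.sum_range_succ', pathSum_zero, transfer]
  congr 1
  simp only [Finset.mul_sum, pathSum_succ]
  exact Finset.sum_comm

lemma one_le_sum_pathSum (S : BoxLikeGIFS V E) {p : E → ℝ} (hp : ∀ e, 0 < p e) (q x y : ℝ) {n : ℕ}
    (hn : n ≠ 0) (v : V) : 1 ≤ ∑ l ∈ Finset.range n, S.pathSum p q x y l v := by
  rw [← S.pathSum_zero p q x y v]
  exact Finset.single_le_sum (f := fun l => S.pathSum p q x y l v)
    (fun l _ => (S.pathSum_pos hp q x y l v).le) (Finset.mem_range.2 (Nat.pos_of_ne_zero hn))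

lemma exists_subinvariant {S : BoxLikeGIFS V E} (hSC : S.StronglyConnected) {p : E → ℝ}
    (hp : ∀ e, 0 < p e) {q x y ε : ℝ} (hε : 0 < ε) (hρ : specRad (S.Fmat p q x y) = 1) :
    ∃ h : V → ℝ, (∀ v, 1 ≤ h v) ∧ ∀ v, S.transfer p q (x + ε) (y + ε) h v ≤ h v := by
  obtain ⟨_, r, _, _, hr0, hr1, hr⟩ := S.exists_ratio_bounds
  have hRpos : 0 < r ^ (ε + ε) := Real.rpow_pos_of_pos hr0 _
  have hRlt : r ^ (ε + ε) < 1 := Real.rpow_lt_one hr0.le hr1 (by linarith)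
  obtain ⟨n, hn, hn0⟩ := ((S.eventually_totalSum_le hp
    (hρ.trans_lt ((one_lt_inv₀ hRpos).2 hRlt))).and (eventually_ne_atTop 0)).exists
  refine ⟨_, S.one_le_sum_pathSum hp q (x + ε) (y + ε) hn0, fun v => ?_⟩
  have h1 := S.transfer_sum_pathSum p q (x + ε) (y + ε) n v
  have h2 : S.pathSum p q (x + ε) (y + ε) n v ≤ 1 := by
    obtain ⟨e, rfl⟩ := hSC.exists_term_eq v
    calc _ ≤ S.totalSum p q (x + ε) (y + ε) n :=
          Finset.single_le_sum (f := fun e => S.pathSum p q (x + ε) (y + ε) n (S.term e))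
            (fun e _ => (S.pathSum_pos hp _ _ _ _ _).le) (Finset.mem_univ e)
      _ ≤ (r ^ (ε + ε)) ^ n * S.totalSum p q x y n :=
          S.totalSum_add_le hp hr0 (fun e => (hr e).2.2) q x y hε.le hε.le n
      _ ≤ (r ^ (ε + ε)) ^ n * ((r ^ (ε + ε))⁻¹) ^ n := by gcongr
      _ = 1 := by rw [← mul_pow, mul_inv_cancel₀ hRpos.ne', one_pow]
  linarith

lemma mul_pathSum_le_pathSum_succ (S : BoxLikeGIFS V E) {p : E → ℝ} (hp : ∀ e, 0 < p e)
    (q x y : ℝ) {c : ℝ} (hc : ∀ v, c ≤ S.pathSum p q x y 1 v) (k : ℕ) (v : V) :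
    c * S.pathSum p q x y k v ≤ S.pathSum p q x y (k + 1) v := by
  induction k generalizing v with
  | zero => simpa [pathSum_zero] using hc v
  | succ k ih =>
    rw [S.pathSum_succ p q x y k, S.pathSum_succ p q x y (k + 1), Finset.mul_sum]
    refine Finset.sum_le_sum fun e _ => ?_
    rw [mul_left_comm]
    exact mul_le_mul_of_nonneg_left (ih _) (S.wt_pos hp q x y e).le

/-- By strong connectivity, path sums from different vertices are comparable. -/
lemma StronglyConnected.exists_pathSum_le [Finite V] {S : BoxLikeGIFS V E}
    (hSC : S.StronglyConnected) {p : E → ℝ} (hp : ∀ e, 0 < p e) (q x y : ℝ) :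
    ∃ m : ℕ, ∃ c > 0, ∀ k v v', c * S.pathSum p q x y k v' ≤ S.pathSum p q x y (k + m) v := by
  have hpos := S.pathSum_pos hp q x y
  obtain ⟨c₀, hc₀pos, hc₀⟩ : ∃ c₀ > 0, ∀ v, c₀ ≤ S.pathSum p q x y 1 v := by
    have h : ∀ᶠ c in nhdsWithin (0 : ℝ) (Ioi 0), ∀ v, c ≤ S.pathSum p q x y 1 v :=
      eventually_all.2 fun v =>
        eventually_nhdsWithin_of_eventually_nhds (eventually_le_nhds (hpos 1 v))
    obtain ⟨c, hc, hc0⟩ := (h.and self_mem_nhdsWithin).exists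
    exact ⟨c, hc0, hc⟩
  have hedge : ∀ e k, S.wt p q x y e * S.pathSum p q x y k (S.term e) ≤
      S.pathSum p q x y (k + 1) (S.init e) := by
    intro e k
    rw [pathSum_succ]
    exact Finset.single_le_sum
      (f := fun f : {f // S.init f = S.init e} =>
        S.wt p q x y f * S.pathSum p q x y k (S.term f))
      (fun f _ => (mul_pos (S.wt_pos hp q x y f) (hpos k _)).le) (Finset.mem_univ ⟨e, rfl⟩)
  have hpath : ∀ v v', ∃ m : ℕ, ∃ c > 0, ∀ k,
      c * S.pathSum p q x y k v' ≤ S.pathSum p q x y (k + m) v := by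
    intro v v'
    induction hSC v v' with
    | single h =>
      obtain ⟨e, rfl, rfl⟩ := h
      exact ⟨1, _, S.wt_pos hp q x y e, hedge e⟩
    | tail _ h ih =>
      obtain ⟨e, rfl, rfl⟩ := h
      obtain ⟨m, c, hc, hm⟩ := ih
      refine ⟨1 + m, c * S.wt p q x y e, mul_pos hc (S.wt_pos hp q x y e), fun k => ?_⟩
      rw [← add_assoc, mul_assoc]
      exact (mul_le_mul_of_nonneg_left (hedge e k) hc.le).trans (hm (k + 1))
  have hev : ∀ v v', ∀ᶠ m : ℕ in atTop, ∃ c > 0, ∀ k,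
      c * S.pathSum p q x y k v' ≤ S.pathSum p q x y (k + m) v := by
    intro v v'
    obtain ⟨m₀, h₀⟩ := hpath v v'
    filter_upwards [eventually_ge_atTop m₀] with m hm
    induction m, hm using Nat.le_induction with
    | base => exact h₀
    | succ m _ ih =>
      obtain ⟨c, hc, h⟩ := ih
      refine ⟨c₀ * c, mul_pos hc₀pos hc, fun k => ?_⟩
      rw [mul_assoc]
      exact (mul_le_mul_of_nonneg_left (h k) hc₀pos.le).trans
        (S.mul_pathSum_le_pathSum_succ hp q x y hc₀ (k + m) v)
  obtain ⟨m, hm⟩ := (eventually_all.2 fun v => eventually_all.2 fun v' => hev v v').exists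
  choose c hcpos hc using hm
  have h : ∀ᶠ t in nhdsWithin (0 : ℝ) (Ioi 0), ∀ v v', t ≤ c v v' :=
    eventually_all.2 fun v => eventually_all.2 fun v' =>
      eventually_nhdsWithin_of_eventually_nhds (eventually_le_nhds (hcpos v v'))
  obtain ⟨t, ht, ht0⟩ := (h.and self_mem_nhdsWithin).exists
  exact ⟨m, t, ht0, fun k v v' =>
    (mul_le_mul_of_nonneg_right (ht v v') (hpos k v').le).trans (hc v v' k)⟩

lemma exists_superinvariant [Finite V] {S : BoxLikeGIFS V E} (hSC : S.StronglyConnected)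
    {p : E → ℝ} (hp : ∀ e, 0 < p e) {q x y ε : ℝ} (hε : 0 < ε)
    (hρ : specRad (S.Fmat p q x y) = 1) :
    ∃ h : V → ℝ, (∀ v, 1 ≤ h v) ∧ ∀ v, h v ≤ S.transfer p q (x - ε) (y - ε) h v := by
  obtain ⟨_, r, _, _, hr0, hr1, hr⟩ := S.exists_ratio_bounds
  have hRpos : 0 < r ^ ε := Real.rpow_pos_of_pos hr0 _
  have hRlt : r ^ ε < 1 := Real.rpow_lt_one hr0.le hr1 hε
  obtain ⟨m, c, hc, hm⟩ := hSC.exists_pathSum_le hp q (x - ε) (y - ε)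
  have htop : Tendsto (fun n : ℕ => ((r ^ ε)⁻¹) ^ n) atTop atTop :=
    tendsto_pow_atTop_atTop_of_one_lt ((one_lt_inv₀ hRpos).2 hRlt)
  obtain ⟨k, hk, hk', hk0⟩ := ((S.frequently_le_totalSum hp hRpos.le
    (hRlt.trans_eq hρ.symm)).and_eventually
      ((htop.eventually_ge_atTop (c⁻¹ * Fintype.card E)).and (eventually_ne_atTop 0))).exists
  have hadd := S.totalSum_add_le hp hr0 (fun e => (hr e).2.2) q (x - ε) (y - ε) hε.le hε.le k
  rw [sub_add_cancel, sub_add_cancel, Real.rpow_add hr0, mul_pow] at hadd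
  have htot : c⁻¹ * Fintype.card E ≤ S.totalSum p q (x - ε) (y - ε) k := by
    refine hk'.trans ?_
    have hpk : 0 < (r ^ ε) ^ k := pow_pos hRpos k
    rw [inv_pow, inv_le_iff_one_le_mul₀ hpk]
    have h := hk.trans hadd
    rw [mul_assoc] at h
    rw [mul_comm]
    exact le_of_mul_le_mul_left (by rwa [mul_one]) hpk
  refine ⟨_, S.one_le_sum_pathSum hp q (x - ε) (y - ε) (n := k + m) (by omega), fun v => ?_⟩
  have h1 := S.transfer_sum_pathSum p q (x - ε) (y - ε) (k + m) v
  have h2 : 1 ≤ S.pathSum p q (x - ε) (y - ε) (k + m) v := by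
    have h3 : c * S.totalSum p q (x - ε) (y - ε) k ≤
        Fintype.card E * S.pathSum p q (x - ε) (y - ε) (k + m) v := by
      rw [totalSum, Finset.mul_sum]
      refine (Finset.sum_le_card_nsmul _ _ _ fun e _ => hm k v (S.term e)).trans_eq ?_
      simp
    have hcard : (0 : ℝ) < Fintype.card E := by
      obtain ⟨e, _⟩ := S.edge_exists v
      exact_mod_cast Fintype.card_pos_iff.2 ⟨e⟩
    have h4 : (Fintype.card E : ℝ) ≤ c * S.totalSum p q (x - ε) (y - ε) k := by
      rwa [inv_mul_le_iff₀ hc] at htot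
    exact le_of_mul_le_mul_left (by rw [mul_one]; exact h4.trans h3) hcard
  linarith

end BoxLikeGIFS

/-! ### Counting integers -/

lemma card_le_of_forall_mem_Icc {s : Finset ℤ} {A B : ℝ} (hAB : A ≤ B)
    (h : ∀ k ∈ s, (k : ℝ) ∈ Icc A B) : (s.card : ℝ) ≤ B - A + 1 := by
  rcases s.eq_empty_or_nonempty with rfl | ⟨k₀, hk₀⟩
  · simp only [Finset.card_empty, Nat.cast_zero]
    linarith
  have hsub : s ⊆ Finset.Icc ⌈A⌉ ⌊B⌋ := fun k hk =>
    Finset.mem_Icc.2 ⟨Int.ceil_le.2 (h k hk).1, Int.le_floor.2 (h k hk).2⟩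
  have h1 := Finset.mem_Icc.1 (hsub hk₀)
  have h2 : (s.card : ℤ) ≤ ⌊B⌋ + 1 - ⌈A⌉ := by
    have := Finset.card_le_card hsub
    rw [Int.card_Icc] at this
    omega
  have h3 : (s.card : ℝ) ≤ ⌊B⌋ + 1 - ⌈A⌉ := by exact_mod_cast h2
  linarith [Int.floor_le B, Int.le_ceil A]

lemma card_le_of_forall_mem_Icc_prod {s : Finset (ℤ × ℤ)} {A₁ A₂ L : ℝ} (hL : 0 ≤ L)
    (h₁ : ∀ k ∈ s, (k.1 : ℝ) ∈ Icc A₁ (A₁ + L)) (h₂ : ∀ k ∈ s, (k.2 : ℝ) ∈ Icc A₂ (A₂ + L)) :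
    (s.card : ℝ) ≤ (L + 1) ^ 2 := by
  have hsub : s ⊆ s.image Prod.fst ×ˢ s.image Prod.snd := fun k hk =>
    Finset.mem_product.2 ⟨Finset.mem_image_of_mem _ hk, Finset.mem_image_of_mem _ hk⟩
  have h3 : (s.card : ℝ) ≤ (s.image Prod.fst).card * (s.image Prod.snd).card := by
    exact_mod_cast (Finset.card_le_card hsub).trans_eq (Finset.card_product _ _)
  have h4 : ((s.image Prod.fst).card : ℝ) ≤ L + 1 := by
    have := card_le_of_forall_mem_Icc (s := s.image Prod.fst) (le_add_of_nonneg_right hL)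
      (Finset.forall_mem_image.2 h₁)
    linarith
  have h5 : ((s.image Prod.snd).card : ℝ) ≤ L + 1 := by
    have := card_le_of_forall_mem_Icc (s := s.image Prod.snd) (le_add_of_nonneg_right hL)
      (Finset.forall_mem_image.2 h₂)
    linarith
  calc (s.card : ℝ) ≤ _ := h3
    _ ≤ (L + 1) * (L + 1) := by gcongr
    _ = _ := by ring

lemma card_le_mul_of_fiber_le {ι κ : Type*} [DecidableEq ι] [DecidableEq κ]
    {s : Finset (ι × κ)} {m n : ℝ} (hm : 0 ≤ m)
    (h₁ : ((s.image Prod.fst).card : ℝ) ≤ n)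
    (h₂ : ∀ i, (((s.filter (fun x => x.1 = i)).image Prod.snd).card : ℝ) ≤ m) :
    (s.card : ℝ) ≤ m * n := by
  have h3 : s.card ≤ ⌊m⌋₊ * (s.image Prod.fst).card := by
    refine Finset.card_le_mul_card_image s _ fun i _ => Nat.le_floor ?_
    rw [← Finset.card_image_of_injOn (f := Prod.snd)]
    · exact h₂ i
    · intro x hx y hy hxy
      simp only [Finset.coe_filter, mem_ofPred_eq] at hx hy
      exact Prod.ext (hx.2.trans hy.2.symm) hxy
  calc (s.card : ℝ) ≤ ⌊m⌋₊ * (s.image Prod.fst).card := by exact_mod_cast h3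
    _ ≤ m * n := mul_le_mul (Nat.floor_le hm) h₁ (Nat.cast_nonneg _) hm

/-! ### Affine maps of the line -/

lemma exists_affine_mem_Icc (α u l : ℝ) (L : ℝ) :
    ∃ A, ∀ z ∈ Icc l (l + L), α * z + u ∈ Icc A (A + |α| * L) := by
  rcases le_total 0 α with h | h
  · refine ⟨α * l + u, fun z hz => ?_⟩
    rw [abs_of_nonneg h]
    constructor <;> nlinarith [hz.1, hz.2]
  · refine ⟨α * (l + L) + u, fun z hz => ?_⟩
    rw [abs_of_nonpos h]
    constructor <;> nlinarith [hz.1, hz.2]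

/-- An interval of length at least `κ` contains in its interior points of the lattice `(κ / 2) ℤ`
close to any of its points. -/
lemma exists_lattice_near {α u z κ : ℝ} (hκ : 0 < κ) (hα : κ ≤ |α|) (hz : z ∈ Icc (0 : ℝ) 1) :
    ∃ t ∈ Ioo (0 : ℝ) 1, ∃ m : ℤ, α * t + u = m * (κ / 2) ∧
      m * (κ / 2) ∈ Icc (α * z + u - κ) (α * z + u + κ) := by
  have hα0 : α ≠ 0 := abs_pos.1 (hκ.trans_le hα)
  set A := min u (α + u) with hA
  set lo := max A (α * z + u - κ) with hlo
  set m : ℤ := ⌊lo / (κ / 2)⌋ + 1 with hm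
  have h1 : lo < m * (κ / 2) := by
    have := Int.lt_floor_add_one (lo / (κ / 2))
    rw [div_lt_iff₀ (by positivity)] at this
    rw [hm]
    push_cast
    exact this
  have h2 : m * (κ / 2) ≤ lo + κ / 2 := by
    have := Int.floor_le (lo / (κ / 2))
    rw [le_div_iff₀ (by positivity)] at this
    rw [hm]
    push_cast
    linarith
  have hAlo : A ≤ lo := le_max_left _ _
  have hzlo : α * z + u - κ ≤ lo := le_max_right _ _
  have ht : α * ((m * (κ / 2) - u) / α) + u = m * (κ / 2) := by field_simp; ring
  obtain ⟨hz0, hz1⟩ := hz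
  rcases hα0.lt_or_gt with h | h
  · have hAe : A = α + u := min_eq_right (by linarith)
    rw [abs_of_neg h] at hα
    have hup : lo ≤ u - κ := max_le (by linarith) (by nlinarith)
    have hup' : lo ≤ α * z + u := max_le (by nlinarith) (by linarith)
    refine ⟨_, ⟨?_, ?_⟩, m, ht, ?_, ?_⟩
    · exact div_pos_of_neg_of_neg (by linarith) h
    · rw [div_lt_one_of_neg h]
      linarith
    · linarith
    · linarith
  · have hAe : A = u := min_eq_left (by linarith)
    rw [abs_of_pos h] at hα
    have hup : lo ≤ α + u - κ := max_le (by linarith) (by nlinarith)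
    have hup' : lo ≤ α * z + u := max_le (by nlinarith) (by linarith)
    refine ⟨_, ⟨?_, ?_⟩, m, ht, ?_, ?_⟩
    · exact div_pos (by linarith) h
    · rw [div_lt_one h]
      linarith
    · linarith
    · linarith

/-- The indices of the `s`-mesh intervals which meet the preimage of a `δ`-interval. -/
lemma card_meshCube1_preimage_le {K : Finset ℤ} {α u s δ η b : ℝ} (hη : 0 < η) (hs : 0 < s)
    (hδ : 0 < δ) (hα : α ≠ 0) (hαs : η * δ ≤ |α| * s)
    (h : ∀ k ∈ K, ∃ z ∈ meshCube1 s k, α * z + u ∈ Icc b (b + δ)) :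
    (K.card : ℝ) ≤ 2 / η + 2 := by
  have hαp := abs_pos.2 hα
  set z₀ := (b - u) / α with hz₀
  have hz₀' : α * z₀ + u = b := by rw [hz₀]; field_simp; ring
  have hL : 0 ≤ 1 / η := by positivity
  have := card_le_of_forall_mem_Icc (s := K) (A := z₀ / s - 1 / η - 1) (B := z₀ / s + 1 / η)
    (by linarith) fun k hk => ?_
  · calc _ ≤ _ := this
      _ = _ := by ring
  obtain ⟨z, ⟨hz1, hz2⟩, hb1, hb2⟩ := h k hk
  have hd : |z - z₀| ≤ 1 / η * s := by
    have h1 : |α| * |z - z₀| ≤ δ := by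
      rw [← abs_mul, abs_of_nonneg (by linarith)]
      linarith
    have h2 : |α| * |z - z₀| ≤ |α| * (1 / η * s) := by
      calc _ ≤ δ := h1
        _ = 1 / η * (η * δ) := by field_simp
        _ ≤ 1 / η * (|α| * s) := by gcongr
        _ = _ := by ring
    exact le_of_mul_le_mul_left h2 hαp
  rw [abs_le] at hd
  have e : z₀ = z₀ / s * s := by field_simp
  constructor
  · refine le_of_mul_le_mul_right ?_ hs
    linarith
  · refine le_of_mul_le_mul_right ?_ hs
    linarith

/-! ### Strips of a cell -/

namespace Cell

variable {V : Type}

/-- The strips of the unit square which a cell maps to approximate squares. -/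
def strip (w : Cell V) (k : ℤ) : Set (ℝ × ℝ) :=
  if |w.sy| ≤ |w.sx| then {z | z.1 ∈ meshCube1 (|w.sy| / |w.sx|) k}
  else {z | z.2 ∈ meshCube1 (|w.sx| / |w.sy|) k}

/-- The moment sum of the projection of the measure at the vertex of a cell to the long side. -/
noncomputable def projSum (μ : V → Measure (ℝ × ℝ)) (q : ℝ) (w : Cell V) : ℝ :=
  if |w.sy| ≤ |w.sx| then Dq1 ((μ w.vert).map Prod.fst) (|w.sy| / |w.sx|) q
  else Dq1 ((μ w.vert).map Prod.snd) (|w.sx| / |w.sy|) q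

/-- The mesh cube `Q` meets the image of the `k`-th strip of the cell. -/
def Meets (δ : ℝ) (Q : ℤ × ℤ) (w : Cell V) (k : ℤ) : Prop :=
  ∃ z ∈ w.strip k ∩ closedSq, w.map z ∈ meshCube2 δ Q

lemma map_strip_subset {w : Cell V} (hx : w.sx ≠ 0) (hy : w.sy ≠ 0) (k : ℤ) :
    ∃ A₁ A₂ : ℝ, ∀ z ∈ w.strip k ∩ closedSq,
      (w.map z).1 ∈ Icc A₁ (A₁ + min |w.sx| |w.sy|) ∧
      (w.map z).2 ∈ Icc A₂ (A₂ + min |w.sx| |w.sy|) := by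
  have hx' := abs_pos.2 hx
  have hy' := abs_pos.2 hy
  by_cases h : |w.sy| ≤ |w.sx|
  · obtain ⟨A₁, h₁⟩ := exists_affine_mem_Icc w.sx w.tx (k * (|w.sy| / |w.sx|)) (|w.sy| / |w.sx|)
    obtain ⟨A₂, h₂⟩ := exists_affine_mem_Icc w.sy w.ty 0 1
    rw [mul_div_cancel₀ _ hx'.ne'] at h₁
    rw [mul_one] at h₂
    refine ⟨A₁, A₂, fun z hz => ?_⟩
    simp only [strip, h, if_true] at hz
    rw [min_eq_right h]
    exact ⟨h₁ _ (by simpa [meshCube1, add_mul] using hz.1), h₂ _ (by simpa using hz.2.2)⟩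
  · obtain ⟨A₁, h₁⟩ := exists_affine_mem_Icc w.sx w.tx 0 1
    obtain ⟨A₂, h₂⟩ := exists_affine_mem_Icc w.sy w.ty (k * (|w.sx| / |w.sy|)) (|w.sx| / |w.sy|)
    rw [mul_div_cancel₀ _ hy'.ne'] at h₂
    rw [mul_one] at h₁
    refine ⟨A₁, A₂, fun z hz => ?_⟩
    simp only [strip, h, if_false] at hz
    rw [min_eq_left (not_le.1 h).le]
    exact ⟨h₁ _ (by simpa using hz.2.1), h₂ _ (by simpa [meshCube1, add_mul] using hz.1)⟩

lemma card_cubes_le {w : Cell V} (hx : w.sx ≠ 0) (hy : w.sy ≠ 0) {δ : ℝ} (hδ : 0 < δ)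
    (hw : min |w.sx| |w.sy| ≤ δ) (k : ℤ) {s : Finset (ℤ × ℤ)} (hs : ∀ Q ∈ s, Meets δ Q w k) :
    (s.card : ℝ) ≤ 9 := by
  obtain ⟨A₁, A₂, hA⟩ := map_strip_subset hx hy k
  have key : ∀ {A t : ℝ} {m : ℤ}, t ∈ Icc A (A + min |w.sx| |w.sy|) →
      t ∈ Icc (m * δ) ((m + 1) * δ) → (m : ℝ) ∈ Icc (A / δ - 1) (A / δ - 1 + 2) := by
    intro A t m h1 h2
    have e : A / δ * δ = A := div_mul_cancel₀ _ hδ.ne'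
    constructor
    · refine le_of_mul_le_mul_right ?_ hδ
      linarith [h1.1, h2.2]
    · refine le_of_mul_le_mul_right ?_ hδ
      linarith [h1.2, h2.1]
  have := card_le_of_forall_mem_Icc_prod (s := s) (A₁ := A₁ / δ - 1) (A₂ := A₂ / δ - 1)
    (L := 2) (by norm_num) (fun Q hQ => ?_) fun Q hQ => ?_
  · linarith
  · obtain ⟨z, hz, hzQ⟩ := hs Q hQ
    exact key (hA z hz).1 hzQ.1
  · obtain ⟨z, hz, hzQ⟩ := hs Q hQ
    exact key (hA z hz).2 hzQ.2

lemma card_strips_le {w : Cell V} (hx : w.sx ≠ 0) (hy : w.sy ≠ 0) {η δ : ℝ} (hη : 0 < η)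
    (hδ : 0 < δ) (hw : η * δ ≤ min |w.sx| |w.sy|) (Q : ℤ × ℤ) {s : Finset ℤ}
    (hs : ∀ k ∈ s, Meets δ Q w k) : (s.card : ℝ) ≤ 2 / η + 2 := by
  have hx' := abs_pos.2 hx
  have hy' := abs_pos.2 hy
  by_cases h : |w.sy| ≤ |w.sx|
  · refine card_meshCube1_preimage_le (s := |w.sy| / |w.sx|) (u := w.tx) (b := Q.1 * δ) hη
      (by positivity) hδ hx ?_ fun k hk => ?_
    · rw [mul_div_cancel₀ _ hx'.ne']
      exact hw.trans (min_le_right _ _)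
    · obtain ⟨z, hz, hzQ⟩ := hs k hk
      simp only [strip, h, if_true] at hz
      exact ⟨z.1, hz.1, by simpa [add_mul, Cell.map] using hzQ.1⟩
  · refine card_meshCube1_preimage_le (s := |w.sx| / |w.sy|) (u := w.ty) (b := Q.2 * δ) hη
      (by positivity) hδ hy ?_ fun k hk => ?_
    · rw [mul_div_cancel₀ _ hy'.ne']
      exact hw.trans (min_le_left _ _)
    · obtain ⟨z, hz, hzQ⟩ := hs k hk
      simp only [strip, h, if_false] at hz
      exact ⟨z.2, hz.1, by simpa [add_mul, Cell.map] using hzQ.2⟩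

/-- The number of cells with disjoint interiors, of sides at least `η δ`, meeting a mesh cube. -/
lemma card_cells_le {ι : Type*} {w : ι → Cell V} {η δ : ℝ} (hη : 0 < η) (hδ : 0 < δ)
    (hdisj : ∀ i j, i ≠ j → Disjoint ((w i).map '' BoxLikeGIFS.unitSq)
      ((w j).map '' BoxLikeGIFS.unitSq))
    (hw : ∀ i, η * δ ≤ min |(w i).sx| |(w i).sy|) (Q : ℤ × ℤ) {s : Finset ι}
    (hs : ∀ i ∈ s, ∃ z ∈ closedSq, (w i).map z ∈ meshCube2 δ Q) :
    (s.card : ℝ) ≤ (2 / η + 5) ^ 2 := by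
  have hκ : 0 < η * δ := by positivity
  have hL : 0 ≤ 2 / η := by positivity
  choose! z hz hzQ using hs
  have hex : ∀ i, ∃ m : ℤ × ℤ, i ∈ s → (∃ t ∈ BoxLikeGIFS.unitSq,
      (w i).map t = ((m.1 : ℝ) * (η * δ / 2), (m.2 : ℝ) * (η * δ / 2))) ∧
      (m.1 : ℝ) * (η * δ / 2) ∈ Icc (((w i).map (z i)).1 - η * δ) (((w i).map (z i)).1 + η * δ) ∧
      (m.2 : ℝ) * (η * δ / 2) ∈
        Icc (((w i).map (z i)).2 - η * δ) (((w i).map (z i)).2 + η * δ) := by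
    intro i
    by_cases hi : i ∈ s
    · obtain ⟨t₁, ht₁, m₁, he₁, hm₁⟩ := exists_lattice_near (u := (w i).tx) hκ
        ((hw i).trans (min_le_left _ _)) (hz i hi).1
      obtain ⟨t₂, ht₂, m₂, he₂, hm₂⟩ := exists_lattice_near (u := (w i).ty) hκ
        ((hw i).trans (min_le_right _ _)) (hz i hi).2
      exact ⟨(m₁, m₂), fun _ => ⟨⟨(t₁, t₂), ⟨ht₁, ht₂⟩, Prod.ext he₁ he₂⟩, hm₁, hm₂⟩⟩
    · exact ⟨0, fun h => absurd h hi⟩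
  choose m hm using hex
  have hinj : InjOn m s := by
    intro i hi j hj hij
    by_contra hne
    obtain ⟨⟨t, ht, hte⟩, -⟩ := hm i hi
    obtain ⟨⟨t', ht', hte'⟩, -⟩ := hm j hj
    refine Set.disjoint_left.1 (hdisj i j hne) (mem_image_of_mem _ ht) ⟨t', ht', ?_⟩
    rw [hte, hte', hij]
  have key : ∀ {n l : ℤ} {t : ℝ}, (n : ℝ) * (η * δ / 2) ∈ Icc (t - η * δ) (t + η * δ) →
      t ∈ Icc (l * δ) ((l + 1) * δ) →
      (n : ℝ) ∈ Icc (2 * l / η - 2) (2 * l / η - 2 + (2 / η + 4)) := by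
    intro n l t h1 h2
    have e1 : 2 * l / η * (η * δ / 2) = l * δ := by field_simp
    have e2 : 2 / η * (η * δ / 2) = δ := by field_simp
    constructor
    · refine le_of_mul_le_mul_right ?_ (half_pos hκ)
      linarith [h1.1, h2.1]
    · refine le_of_mul_le_mul_right ?_ (half_pos hκ)
      linarith [h1.2, h2.2]
  rw [← Finset.card_image_of_injOn hinj]
  have := card_le_of_forall_mem_Icc_prod (s := s.image m) (A₁ := 2 * Q.1 / η - 2)
    (A₂ := 2 * Q.2 / η - 2) (L := 2 / η + 4) (by linarith)
    (Finset.forall_mem_image.2 fun i hi => key (hm i hi).2.1 (hzQ i hi).1)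
    (Finset.forall_mem_image.2 fun i hi => key (hm i hi).2.2 (hzQ i hi).2)
  calc _ ≤ _ := this
    _ = _ := by ring

end Cell

lemma map_fst_compl_Icc {ν : Measure (ℝ × ℝ)} (hν : ν closedSqᶜ = 0) :
    ν.map Prod.fst (Icc (0 : ℝ) 1)ᶜ = 0 := by
  rw [Measure.map_apply measurable_fst measurableSet_Icc.compl]
  exact measure_mono_null (compl_subset_compl.2 fun z hz => hz.1) hν

lemma map_snd_compl_Icc {ν : Measure (ℝ × ℝ)} (hν : ν closedSqᶜ = 0) :
    ν.map Prod.snd (Icc (0 : ℝ) 1)ᶜ = 0 := by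
  rw [Measure.map_apply measurable_snd measurableSet_Icc.compl]
  exact measure_mono_null (compl_subset_compl.2 fun z hz => hz.2) hν

lemma measurableSet_meshCube2 (δ : ℝ) (Q : ℤ × ℤ) : MeasurableSet (meshCube2 δ Q) :=
  measurableSet_Icc.prod measurableSet_Icc

namespace Cell

variable {V : Type}

/-- `N` bounds the inverse eccentricity of the cell. -/
def EccLe (w : Cell V) (N : ℕ) : Prop := |w.sx| / |w.sy| ≤ N ∧ |w.sy| / |w.sx| ≤ N

lemma projSum_eq_sum {μ : V → Measure (ℝ × ℝ)} [∀ v, IsProbabilityMeasure (μ v)]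
    (hμ : ∀ v, μ v closedSqᶜ = 0) {w : Cell V} (hx : w.sx ≠ 0) (hy : w.sy ≠ 0) {N : ℕ}
    (hN : w.EccLe N) (q : ℝ) :
    w.projSum μ q = ∑ k ∈ Finset.Icc (-(N : ℤ)) N, qpow q ((μ w.vert).real (w.strip k)) := by
  have hx' := abs_pos.2 hx
  have hy' := abs_pos.2 hy
  by_cases h : |w.sy| ≤ |w.sx|
  · simp only [projSum, strip, h, if_true]
    rw [Dq1_eq_sum _ (map_fst_compl_Icc (hμ _)) (by positivity) (by simpa using hN.1)]
    refine Finset.sum_congr rfl fun k _ => ?_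
    rw [map_measureReal_apply measurable_fst (show MeasurableSet (meshCube1 _ k) from
      measurableSet_Icc)]
    rfl
  · simp only [projSum, strip, h, if_false]
    rw [Dq1_eq_sum _ (map_snd_compl_Icc (hμ _)) (by positivity) (by simpa using hN.2)]
    refine Finset.sum_congr rfl fun k _ => ?_
    rw [map_measureReal_apply measurable_snd (show MeasurableSet (meshCube1 _ k) from
      measurableSet_Icc)]
    rfl

lemma exists_mem_strip {w : Cell V} (hx : w.sx ≠ 0) (hy : w.sy ≠ 0) {N : ℕ} (hN : w.EccLe N)
    {z : ℝ × ℝ} (hz : z ∈ closedSq) : ∃ k ∈ Finset.Icc (-(N : ℤ)) N, z ∈ w.strip k := by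
  have hx' := abs_pos.2 hx
  have hy' := abs_pos.2 hy
  by_cases h : |w.sy| ≤ |w.sx|
  · simp only [strip, h, if_true]
    have hs : 0 < |w.sy| / |w.sx| := by positivity
    exact ⟨_, floor_div_mem_Icc hs (by simpa using hN.1) hz.1, exists_mem_meshCube1 hs z.1⟩
  · simp only [strip, h, if_false]
    have hs : 0 < |w.sx| / |w.sy| := by positivity
    exact ⟨_, floor_div_mem_Icc hs (by simpa using hN.2) hz.2, exists_mem_meshCube1 hs z.2⟩

end Cell

lemma measureReal_inter_closedSq {ν : Measure (ℝ × ℝ)} [IsFiniteMeasure ν] (hν : ν closedSqᶜ = 0)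
    (A : Set (ℝ × ℝ)) : ν.real A = ν.real (A ∩ closedSq) := by
  simp only [Measure.real, measure_inter_conull hν]

lemma measureReal_le_sum_of_subset {ν : Measure (ℝ × ℝ)} [IsFiniteMeasure ν] {κ : Type*}
    (hν : ν closedSqᶜ = 0) {A : Set (ℝ × ℝ)} (s : Finset κ) (B : κ → Set (ℝ × ℝ))
    (h : ∀ z ∈ A ∩ closedSq, ∃ k ∈ s, z ∈ B k) : ν.real A ≤ ∑ k ∈ s, ν.real (B k) := by
  rw [measureReal_inter_closedSq hν]
  refine (measureReal_mono (s₂ := ⋃ k ∈ s, B k) (fun z hz => ?_)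
    (measure_ne_top _ _)).trans
    (measureReal_biUnion_finset_le s B)
  obtain ⟨k, hk, hz⟩ := h z hz
  exact mem_biUnion hk hz

namespace BoxLikeGIFS

variable {V E : Type} [Fintype E]

/-- The moment sum at scale `δ` is comparable with the sum, over the cells of a cut at scale `δ`,
of the moment sums of projections to the long sides. -/
lemma IsCut.Dq2_comparable {S : BoxLikeGIFS V E} {p : E → ℝ} {μ : V → Measure (ℝ × ℝ)}
    [∀ v, IsProbabilityMeasure (μ v)] (hμ : ∀ v, μ v closedSqᶜ = 0) {η δ : ℝ} {v : V}
    {ι : Type} [Fintype ι] {w : ι → Cell V} (hw : S.IsCut p μ η δ 1 1 v w) (hη : 0 < η)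
    (hδ : 0 < δ) {q : ℝ} (hq : 0 ≤ q) :
    Dq2 (μ v) δ q ≤ ((2 / η + 2) * (2 / η + 5) ^ 2) ^ q * 9 *
        ∑ i, (w i).prob ^ q * (w i).projSum μ q ∧
    ∑ i, (w i).prob ^ q * (w i).projSum μ q ≤
        9 ^ q * ((2 / η + 2) * (2 / η + 5) ^ 2) * Dq2 (μ v) δ q := by
  have hlow : ∀ i, η * δ ≤ min |(w i).sx| |(w i).sy| := by simpa using hw.lower
  have hup : ∀ i, min |(w i).sx| |(w i).sy| ≤ δ := by simpa using hw.upper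
  obtain ⟨N, hN⟩ : ∃ N : ℕ, 1 / δ ≤ N ∧ ∀ i, (w i).EccLe N := by
    refine (Filter.Eventually.and ?_ (eventually_all.2 fun i => Filter.Eventually.and ?_ ?_)).exists
      (f := atTop)
    all_goals exact tendsto_natCast_atTop_atTop.eventually_ge_atTop _
  obtain ⟨hNδ, hN⟩ := hN
  set K := Finset.Icc (-(N : ℤ)) N with hK
  have hM : 0 ≤ (2 / η + 2) * (2 / η + 5) ^ 2 := by positivity
  set y : ι × ℤ → ℝ := fun j => (w j.1).prob * (μ (w j.1).vert).real ((w j.1).strip j.2) with hy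
  have hy0 : ∀ j, 0 ≤ y j := fun j => mul_nonneg (hw.prob_pos _).le measureReal_nonneg
  have hsum : ∑ i, (w i).prob ^ q * (w i).projSum μ q = ∑ j ∈ Finset.univ ×ˢ K, qpow q (y j) := by
    rw [Finset.sum_product]
    refine Finset.sum_congr rfl fun i _ => ?_
    rw [Cell.projSum_eq_sum hμ (hw.sx_ne i) (hw.sy_ne i) (hN i), Finset.mul_sum]
    exact Finset.sum_congr rfl fun k _ => (qpow_mul (hw.prob_pos i) measureReal_nonneg).symm
  have hcubes : ∀ j : ι × ℤ, ∀ s : Finset (ℤ × ℤ), (∀ Q ∈ s, Cell.Meets δ Q (w j.1) j.2) →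
      (s.card : ℝ) ≤ 9 := fun j s hs =>
    Cell.card_cubes_le (hw.sx_ne _) (hw.sy_ne _) hδ (hup _) j.2 hs
  have hstrips : ∀ Q : ℤ × ℤ, ∀ s : Finset (ι × ℤ), (∀ j ∈ s, Cell.Meets δ Q (w j.1) j.2) →
      (s.card : ℝ) ≤ (2 / η + 2) * (2 / η + 5) ^ 2 := by
    intro Q s hs
    refine card_le_mul_of_fiber_le (by positivity) ?_ fun i => ?_
    · refine Cell.card_cells_le hη hδ hw.disj hlow Q (Finset.forall_mem_image.2 fun j hj => ?_)
      obtain ⟨z, hz, hzQ⟩ := hs j hj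
      exact ⟨z, hz.2, hzQ⟩
    · refine Cell.card_strips_le (hw.sx_ne i) (hw.sy_ne i) hη hδ (hlow i) Q
        (Finset.forall_mem_image.2 fun j hj => ?_)
      obtain ⟨h1, h2⟩ := Finset.mem_filter.1 hj
      exact h2 ▸ hs j h1
  rw [hsum, Dq2_eq_sum (μ v) (hμ v) hδ hNδ q]
  constructor
  · refine sum_qpow_le _ _ _ _ (fun Q j => Cell.Meets δ Q (w j.1) j.2) hq hM
      (fun _ _ => measureReal_nonneg) (fun j _ => hy0 j) (fun Q _ => ?_)
      (fun Q _ => hstrips Q _ fun _ h => (Finset.mem_filter.1 h).2)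
      fun j _ => hcubes j _ fun _ h => (Finset.mem_filter.1 h).2
    rw [hw.real_apply _ (measurableSet_meshCube2 δ Q), Finset.sum_filter, Finset.sum_product]
    refine Finset.sum_le_sum fun i _ => ?_
    simp only [hy]
    rw [← Finset.sum_filter, ← Finset.mul_sum]
    refine mul_le_mul_of_nonneg_left ?_ (hw.prob_pos i).le
    refine measureReal_le_sum_of_subset (hμ _) _ _ fun z hz => ?_
    obtain ⟨k, hk, hzk⟩ := Cell.exists_mem_strip (hw.sx_ne i) (hw.sy_ne i) (hN i) hz.2
    exact ⟨k, Finset.mem_filter.2 ⟨hk, z, ⟨hzk, hz.2⟩, hz.1⟩, hzk⟩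
  · refine sum_qpow_le _ _ _ _ (fun j Q => Cell.Meets δ Q (w j.1) j.2) hq (by norm_num)
      (fun j _ => hy0 j) (fun _ _ => measureReal_nonneg) (fun j _ => ?_)
      (fun j _ => hcubes j _ fun _ h => (Finset.mem_filter.1 h).2)
      fun Q _ => hstrips Q _ fun _ h => (Finset.mem_filter.1 h).2
    obtain ⟨i, k⟩ := j
    calc y (i, k) ≤ (w i).prob * ∑ Q ∈ (K ×ˢ K).filter fun Q => Cell.Meets δ Q (w i) k,
          (μ (w i).vert).real ((w i).map ⁻¹' meshCube2 δ Q) := by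
          refine mul_le_mul_of_nonneg_left ?_ (hw.prob_pos i).le
          refine measureReal_le_sum_of_subset (hμ _) _ _ fun z hz => ?_
          have hm := mapsTo_closedSq (hw.inside i) hz.2
          have h1 := exists_mem_meshCube1 hδ ((w i).map z).1
          have h2 := exists_mem_meshCube1 hδ ((w i).map z).2
          refine ⟨(⌊((w i).map z).1 / δ⌋, ⌊((w i).map z).2 / δ⌋), Finset.mem_filter.2
            ⟨Finset.mem_product.2 ⟨floor_div_mem_Icc hδ hNδ hm.1, floor_div_mem_Icc hδ hNδ hm.2⟩,
              z, hz, h1, h2⟩, h1, h2⟩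
      _ ≤ _ := by
          rw [Finset.mul_sum]
          refine Finset.sum_le_sum fun Q _ => ?_
          rw [hw.real_apply _ (measurableSet_meshCube2 δ Q)]
          exact Finset.single_le_sum
            (f := fun i => (w i).prob * (μ (w i).vert).real ((w i).map ⁻¹' meshCube2 δ Q))
            (fun i _ => mul_nonneg (hw.prob_pos i).le measureReal_nonneg) (Finset.mem_univ i)

end BoxLikeGIFS

/-! ### Scalar estimates -/

lemma rpow_aspect_le {c d δ η ε : ℝ} (hη : 0 < η) (hδ : 0 < δ) (hc : 0 < c) (hc1 : c ≤ 1)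
    (hd : η * δ ≤ d) (hdδ : d ≤ δ) (hε : 0 ≤ ε) (τ g : ℝ) :
    (d / c) ^ (-τ - ε) ≤ (η ^ |g|)⁻¹ * (η * δ) ^ (-ε) * δ ^ (-g) * (c ^ τ * d ^ (g - τ)) := by
  have hηδ : 0 < η * δ := by positivity
  have hd0 : 0 < d := hηδ.trans_le hd
  have h1 : (d / c) ^ (-ε) ≤ (η * δ) ^ (-ε) :=
    Real.rpow_le_rpow_of_nonpos hηδ (hd.trans (le_div_self hd0.le hc hc1)) (by linarith)
  have h2 : (d / δ) ^ (-g) ≤ (η ^ |g|)⁻¹ := by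
    rw [← abs_neg g]
    exact rpow_le_rpow_neg_abs hη ((le_div_iff₀ hδ).2 hd) ((div_le_one hδ).2 hdδ)
  have h3 : (d / c) ^ (-τ - ε) = (d / δ) ^ (-g) * (d / c) ^ (-ε) * δ ^ (-g) *
      (c ^ τ * d ^ (g - τ)) := by
    rw [sub_eq_add_neg, Real.rpow_add (by positivity), Real.div_rpow hd0.le hδ.le,
      Real.div_rpow hd0.le hc.le (-τ), sub_eq_add_neg, Real.rpow_add hd0, Real.rpow_neg hc.le,
      Real.rpow_neg hd0.le g]
    have := Real.rpow_pos_of_pos hd0 g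
    have := Real.rpow_pos_of_pos hδ (-g)
    have := Real.rpow_pos_of_pos hc τ
    field_simp
  rw [h3]
  gcongr

lemma le_rpow_aspect {c d δ η ε : ℝ} (hη : 0 < η) (hδ : 0 < δ) (hdc : d ≤ c) (hc1 : c ≤ 1)
    (hd : η * δ ≤ d) (hdδ : d ≤ δ) (hε : 0 ≤ ε) {τ x : ℝ} (hx : x ≤ τ) (g : ℝ) :
    η ^ |g| * (η * δ) ^ ε * δ ^ (-g) * (c ^ x * d ^ (g - x)) ≤ (d / c) ^ (-τ + ε) := by
  have hηδ : 0 < η * δ := by positivity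
  have hd0 : 0 < d := hηδ.trans_le hd
  have hc : 0 < c := hd0.trans_le hdc
  have h1 : (η * δ) ^ ε ≤ (d / c) ^ ε :=
    Real.rpow_le_rpow hηδ.le (hd.trans (le_div_self hd0.le hc hc1)) hε
  have h2 : η ^ |g| ≤ (d / δ) ^ (-g) := by
    rw [← abs_neg g]
    exact rpow_abs_le_rpow hη ((le_div_iff₀ hδ).2 hd) ((div_le_one hδ).2 hdδ)
  have h3 : (d / δ) ^ (-g) * (d / c) ^ ε * δ ^ (-g) * (c ^ x * d ^ (g - x)) =
      (d / c) ^ (-x + ε) := by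
    rw [Real.rpow_add (by positivity), Real.div_rpow hd0.le hδ.le,
      Real.div_rpow hd0.le hc.le (-x), sub_eq_add_neg, Real.rpow_add hd0, Real.rpow_neg hc.le,
      Real.rpow_neg hd0.le g]
    have := Real.rpow_pos_of_pos hd0 g
    have := Real.rpow_pos_of_pos hδ (-g)
    have := Real.rpow_pos_of_pos hc x
    field_simp
  calc _ ≤ (d / δ) ^ (-g) * (d / c) ^ ε * δ ^ (-g) * (c ^ x * d ^ (g - x)) := by gcongr
    _ = _ := h3
    _ ≤ _ := Real.rpow_le_rpow_of_exponent_ge (by positivity) ((div_le_one hc).2 hdc)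
        (by linarith)

lemma rpow_shift {c d x y ε : ℝ} (hc : 0 < c) (hd : 0 < d) :
    c ^ x * d ^ y = (c * d) ^ (-ε) * (c ^ (x + ε) * d ^ (y + ε)) := by
  rw [Real.mul_rpow hc.le hd.le, Real.rpow_add hc, Real.rpow_add hd, Real.rpow_neg hc.le,
    Real.rpow_neg hd.le]
  have := Real.rpow_pos_of_pos hc ε
  have := Real.rpow_pos_of_pos hd ε
  field_simp

lemma rpow_neg_mul_le {c d t ε : ℝ} (ht : 0 < t) (hc : t ≤ c) (hd : t ≤ d) (hε : 0 ≤ ε) :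
    (c * d) ^ (-ε) ≤ t ^ (-(2 * ε)) := by
  calc (c * d) ^ (-ε) ≤ (t * t) ^ (-ε) :=
        Real.rpow_le_rpow_of_nonpos (by positivity)
          (mul_le_mul hc hd ht.le (ht.le.trans hc)) (by linarith)
    _ = _ := by
        rw [Real.mul_rpow ht.le ht.le, ← Real.rpow_add ht]
        congr 1
        ring

namespace BoxLikeGIFS

variable {V E : Type} [Fintype E] {S : BoxLikeGIFS V E} {p : E → ℝ} {μ : V → Measure (ℝ × ℝ)}
  {η δ : ℝ} {v : V} {ι : Type} [Fintype ι] {w : ι → Cell V}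

namespace IsCut

lemma sum_le (hw : S.IsCut p μ η δ 1 1 v w) (hη : 0 < η) (hδ : 0 < δ) {q x y ε : ℝ} (hε : 0 ≤ ε)
    {h : V → ℝ} (h1 : ∀ u, 1 ≤ h u) (hsub : ∀ u, S.transfer p q (x + ε) (y + ε) h u ≤ h u) :
    ∑ i, (w i).prob ^ q * (|(w i).sx| ^ x * |(w i).sy| ^ y) ≤ (η * δ) ^ (-(2 * ε)) * h v := by
  have hηδ : 0 < η * δ := by positivity
  calc _ ≤ ∑ i, (η * δ) ^ (-(2 * ε)) *
        ((w i).prob ^ q * |(w i).sx| ^ (x + ε) * |(w i).sy| ^ (y + ε) * h (w i).vert) := by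
        refine Finset.sum_le_sum fun i _ => ?_
        have hc := abs_pos.2 (hw.sx_ne i)
        have hd := abs_pos.2 (hw.sy_ne i)
        have hpi := hw.prob_pos i
        have hl : η * δ ≤ min |(w i).sx| |(w i).sy| := by simpa using hw.lower i
        rw [rpow_shift (ε := ε) hc hd]
        have hs := rpow_neg_mul_le hηδ (hl.trans (min_le_left _ _)) (hl.trans (min_le_right _ _)) hε
        calc _ ≤ (w i).prob ^ q * ((η * δ) ^ (-(2 * ε)) *
              (|(w i).sx| ^ (x + ε) * |(w i).sy| ^ (y + ε))) * 1 := by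
              rw [mul_one]
              gcongr
          _ ≤ (w i).prob ^ q * ((η * δ) ^ (-(2 * ε)) *
              (|(w i).sx| ^ (x + ε) * |(w i).sy| ^ (y + ε))) * h (w i).vert := by
              gcongr
              exact h1 _
          _ = _ := by ring
    _ ≤ _ := by
        rw [← Finset.mul_sum]
        gcongr
        exact hw.sub q (x + ε) (y + ε) h hsub

lemma one_le_sum (hw : S.IsCut p μ η δ 1 1 v w) (hη : 0 < η) (hδ : 0 < δ) {q x y ε H : ℝ}
    (hε : 0 ≤ ε) {h : V → ℝ} (h1 : ∀ u, 1 ≤ h u) (hH : ∀ u, h u ≤ H)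
    (hsuper : ∀ u, h u ≤ S.transfer p q (x - ε) (y - ε) h u) :
    1 ≤ (η * δ) ^ (-(2 * ε)) * H * ∑ i, (w i).prob ^ q * (|(w i).sx| ^ x * |(w i).sy| ^ y) := by
  have hηδ : 0 < η * δ := by positivity
  calc 1 ≤ h v := h1 v
    _ ≤ _ := hw.super q (x - ε) (y - ε) h hsuper
    _ ≤ _ := by
        rw [Finset.mul_sum]
        refine Finset.sum_le_sum fun i _ => ?_
        have hc := abs_pos.2 (hw.sx_ne i)
        have hd := abs_pos.2 (hw.sy_ne i)
        have hpi := hw.prob_pos i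
        have hl : η * δ ≤ min |(w i).sx| |(w i).sy| := by simpa using hw.lower i
        have hs := rpow_neg_mul_le hηδ (hl.trans (min_le_left _ _)) (hl.trans (min_le_right _ _)) hε
        have hh := h1 (w i).vert
        rw [mul_assoc ((w i).prob ^ q), rpow_shift (x := x - ε) (ε := ε) hc hd, sub_add_cancel,
          sub_add_cancel]
        calc _ ≤ (w i).prob ^ q * ((η * δ) ^ (-(2 * ε)) *
              (|(w i).sx| ^ x * |(w i).sy| ^ y)) * H := by
              gcongr
              exact hH _
          _ = _ := by ring

end IsCut

end BoxLikeGIFS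

namespace BoxLikeGIFS

variable {V E : Type}

/-- Uniform two-sided bounds, with loss `ε` in the exponent, for the moment sums of the
coordinate projections. -/
def ProjBounds (μ : V → Measure (ℝ × ℝ)) (q τ₁ τ₂ ε C : ℝ) : Prop :=
  ∀ v, (∀ s ∈ Ioc (0 : ℝ) 1, s ^ (-τ₁ + ε) ≤ C * Dq1 ((μ v).map Prod.fst) s q ∧
      Dq1 ((μ v).map Prod.fst) s q ≤ C * s ^ (-τ₁ - ε)) ∧
    ∀ s ∈ Ioc (0 : ℝ) 1, s ^ (-τ₂ + ε) ≤ C * Dq1 ((μ v).map Prod.snd) s q ∧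
      Dq1 ((μ v).map Prod.snd) s q ≤ C * s ^ (-τ₂ - ε)

lemma exists_projBounds [Finite V] {μ : V → Measure (ℝ × ℝ)} [∀ v, IsProbabilityMeasure (μ v)]
    (hμ : ∀ v, μ v closedSqᶜ = 0) {q τ₁ τ₂ ε : ℝ} (hq : 0 ≤ q) (hε : 0 < ε)
    (h₁ : ∀ v, HasLq1 ((μ v).map Prod.fst) q τ₁) (h₂ : ∀ v, HasLq1 ((μ v).map Prod.snd) q τ₂) :
    ∃ C > 0, ProjBounds μ q τ₁ τ₂ ε C := by
  have : ∀ᶠ C : ℝ in atTop, 0 < C ∧ ProjBounds μ q τ₁ τ₂ ε C := by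
    refine (eventually_gt_atTop 0).and (eventually_all.2 fun v => ?_)
    have := Measure.isProbabilityMeasure_map (μ := μ v) measurable_fst.aemeasurable
    have := Measure.isProbabilityMeasure_map (μ := μ v) measurable_snd.aemeasurable
    exact ((h₁ v).eventually_bounds (map_fst_compl_Icc (hμ v)) hq hε).and
      ((h₂ v).eventually_bounds (map_snd_compl_Icc (hμ v)) hq hε)
  exact this.exists

variable [Fintype E] {S : BoxLikeGIFS V E} {p : E → ℝ} {μ : V → Measure (ℝ × ℝ)}
  {η δ : ℝ} {v : V} {ι : Type} [Fintype ι] {w : ι → Cell V}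

lemma IsCut.projSum_le (hw : S.IsCut p μ η δ 1 1 v w) (hη : 0 < η) (hδ : 0 < δ) {q τ₁ τ₂ ε C : ℝ}
    (hε : 0 ≤ ε) (hC : 0 < C) (hB : ProjBounds μ q τ₁ τ₂ ε C) (g₁ g₂ : ℝ) (i : ι) :
    (w i).projSum μ q ≤ C * (η * δ) ^ (-ε) *
      ((η ^ |g₁|)⁻¹ * δ ^ (-g₁) * (|(w i).sx| ^ τ₁ * |(w i).sy| ^ (g₁ - τ₁)) +
        (η ^ |g₂|)⁻¹ * δ ^ (-g₂) * (|(w i).sx| ^ (g₂ - τ₂) * |(w i).sy| ^ τ₂)) := by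
  have hc := abs_pos.2 (hw.sx_ne i)
  have hd := abs_pos.2 (hw.sy_ne i)
  have hl : η * δ ≤ min |(w i).sx| |(w i).sy| := by simpa using hw.lower i
  have hu : min |(w i).sx| |(w i).sy| ≤ δ := by simpa using hw.upper i
  by_cases h : |(w i).sy| ≤ |(w i).sx|
  · rw [min_eq_right h] at hl hu
    simp only [Cell.projSum, h, if_true]
    have h1 := ((hB (w i).vert).1 (|(w i).sy| / |(w i).sx|)
      ⟨by positivity, (div_le_one hc).2 h⟩).2
    have h2 := rpow_aspect_le hη hδ hc (hw.sx_le i) hl hu hε τ₁ g₁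
    calc _ ≤ _ := h1
      _ ≤ _ := mul_le_mul_of_nonneg_left h2 hC.le
      _ = C * (η * δ) ^ (-ε) *
          ((η ^ |g₁|)⁻¹ * δ ^ (-g₁) * (|(w i).sx| ^ τ₁ * |(w i).sy| ^ (g₁ - τ₁))) := by ring
      _ ≤ _ := by
        gcongr
        exact le_add_of_nonneg_right (by positivity)
  · rw [min_eq_left (not_le.1 h).le] at hl hu
    simp only [Cell.projSum, h, if_false]
    have h1 := ((hB (w i).vert).2 (|(w i).sx| / |(w i).sy|)
      ⟨by positivity, (div_le_one hd).2 (not_le.1 h).le⟩).2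
    have h2 := rpow_aspect_le hη hδ hd (hw.sy_le i) hl hu hε τ₂ g₂
    calc _ ≤ _ := h1
      _ ≤ _ := mul_le_mul_of_nonneg_left h2 hC.le
      _ = C * (η * δ) ^ (-ε) *
          ((η ^ |g₂|)⁻¹ * δ ^ (-g₂) * (|(w i).sx| ^ (g₂ - τ₂) * |(w i).sy| ^ τ₂)) := by ring
      _ ≤ _ := by
        gcongr
        exact le_add_of_nonneg_left (by positivity)

lemma IsCut.le_projSum (hw : S.IsCut p μ η δ 1 1 v w) (hη : 0 < η) (hδ : 0 < δ)
    {q τ₁ τ₂ ε C x y : ℝ} (hε : 0 ≤ ε) (hB : ProjBounds μ q τ₁ τ₂ ε C)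
    (hx : x ≤ τ₁) (hy : y ≤ τ₂) (i : ι) :
    η ^ |x + y| * (η * δ) ^ ε * δ ^ (-(x + y)) * (|(w i).sx| ^ x * |(w i).sy| ^ y) ≤
      C * (w i).projSum μ q := by
  have hc := abs_pos.2 (hw.sx_ne i)
  have hd := abs_pos.2 (hw.sy_ne i)
  have hl : η * δ ≤ min |(w i).sx| |(w i).sy| := by simpa using hw.lower i
  have hu : min |(w i).sx| |(w i).sy| ≤ δ := by simpa using hw.upper i
  by_cases h : |(w i).sy| ≤ |(w i).sx|
  · rw [min_eq_right h] at hl hu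
    simp only [Cell.projSum, h, if_true]
    have h2 := le_rpow_aspect hη hδ h (hw.sx_le i) hl hu hε hx (x + y)
    rw [add_sub_cancel_left] at h2
    exact h2.trans ((hB (w i).vert).1 _ ⟨by positivity, (div_le_one hc).2 h⟩).1
  · have h' := (not_le.1 h).le
    rw [min_eq_left h'] at hl hu
    simp only [Cell.projSum, h, if_false]
    have h2 := le_rpow_aspect hη hδ h' (hw.sy_le i) hl hu hε hy (x + y)
    rw [add_sub_cancel_right, mul_comm (|(w i).sy| ^ y)] at h2
    exact h2.trans ((hB (w i).vert).2 _ ⟨by positivity, (div_le_one hd).2 h'⟩).1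

variable [Finite V]

lemma Dq2_le_rpow (hSC : S.StronglyConnected) (hROSC : S.ROSC) (hdiag : ∀ e : E, S.diag e = true)
    (hp : S.IsWeights p) (hμ : S.IsGDMeasure p μ) {q τ₁ τ₂ g₁ g₂ : ℝ} (hq : 0 ≤ q)
    (h₁ : ∀ v, HasLq1 ((μ v).map Prod.fst) q τ₁) (h₂ : ∀ v, HasLq1 ((μ v).map Prod.snd) q τ₂)
    (hg₁ : specRad (S.Fmat p q τ₁ (g₁ - τ₁)) = 1) (hg₂ : specRad (S.Fmat p q (g₂ - τ₂) τ₂) = 1)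
    {ε : ℝ} (hε : 0 < ε) (v : V) :
    ∃ C > 0, ∀ δ ∈ Ioo (0 : ℝ) 1, Dq2 (μ v) δ q ≤ C * δ ^ (-max g₁ g₂ - ε) := by
  have := hμ.1
  have hsupp := hμ.measure_compl_closedSq hdiag hROSC hp
  obtain ⟨η, r, hη, hη1, hr0, hr1, hr⟩ := S.exists_ratio_bounds
  have hε3 : 0 < ε / 3 := by positivity
  obtain ⟨C, hC, hB⟩ := exists_projBounds hsupp hq hε3 h₁ h₂
  obtain ⟨k₁, hk₁, hs₁⟩ := exists_subinvariant hSC hp.1 hε3 hg₁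
  obtain ⟨k₂, hk₂, hs₂⟩ := exists_subinvariant hSC hp.1 hε3 hg₂
  have hk₁v := one_pos.trans_le (hk₁ v)
  have hk₂v := one_pos.trans_le (hk₂ v)
  refine ⟨((2 / η + 2) * (2 / η + 5) ^ 2) ^ q * 9 * (C * η ^ (-ε) *
    ((η ^ |g₁|)⁻¹ * k₁ v + (η ^ |g₂|)⁻¹ * k₂ v)), by positivity, fun δ hδ => ?_⟩
  have hδ0 := hδ.1
  obtain ⟨ι, _, w, hw⟩ := exists_isCut hdiag hROSC hp hμ hη hη1 hr1 hr hδ v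
  refine (hw.Dq2_comparable hsupp hη hδ0 hq).1.trans ?_
  rw [mul_assoc (_ * 9)]
  refine mul_le_mul_of_nonneg_left ?_ (by positivity)
  have hsum₁ := hw.sum_le hη hδ0 hε3.le hk₁ hs₁
  have hsum₂ := hw.sum_le hη hδ0 hε3.le hk₂ hs₂
  have hd₁ : δ ^ (-g₁) ≤ δ ^ (-max g₁ g₂) :=
    Real.rpow_le_rpow_of_exponent_ge hδ0 hδ.2.le (neg_le_neg (le_max_left _ _))
  have hd₂ : δ ^ (-g₂) ≤ δ ^ (-max g₁ g₂) :=
    Real.rpow_le_rpow_of_exponent_ge hδ0 hδ.2.le (neg_le_neg (le_max_right _ _))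
  have hpow : (η * δ) ^ (-(ε / 3)) * (η * δ) ^ (-(2 * (ε / 3))) = η ^ (-ε) * δ ^ (-ε) := by
    rw [← Real.rpow_add (by positivity), ← Real.mul_rpow hη.le hδ0.le]
    congr 1
    ring
  calc ∑ i, (w i).prob ^ q * (w i).projSum μ q
      ≤ ∑ i, (w i).prob ^ q * (C * (η * δ) ^ (-(ε / 3)) *
        ((η ^ |g₁|)⁻¹ * δ ^ (-g₁) * (|(w i).sx| ^ τ₁ * |(w i).sy| ^ (g₁ - τ₁)) +
        (η ^ |g₂|)⁻¹ * δ ^ (-g₂) * (|(w i).sx| ^ (g₂ - τ₂) * |(w i).sy| ^ τ₂))) :=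
        Finset.sum_le_sum fun i _ => mul_le_mul_of_nonneg_left
          (hw.projSum_le hη hδ0 hε3.le hC hB g₁ g₂ i) (Real.rpow_nonneg (hw.prob_pos i).le _)
    _ = C * (η * δ) ^ (-(ε / 3)) * ((η ^ |g₁|)⁻¹ * δ ^ (-g₁) *
          ∑ i, (w i).prob ^ q * (|(w i).sx| ^ τ₁ * |(w i).sy| ^ (g₁ - τ₁)) +
        (η ^ |g₂|)⁻¹ * δ ^ (-g₂) *
          ∑ i, (w i).prob ^ q * (|(w i).sx| ^ (g₂ - τ₂) * |(w i).sy| ^ τ₂)) := by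
        simp only [Finset.mul_sum, ← Finset.sum_add_distrib]
        exact Finset.sum_congr rfl fun i _ => by ring
    _ ≤ C * (η * δ) ^ (-(ε / 3)) * ((η ^ |g₁|)⁻¹ * δ ^ (-max g₁ g₂) *
          ((η * δ) ^ (-(2 * (ε / 3))) * k₁ v) +
        (η ^ |g₂|)⁻¹ * δ ^ (-max g₁ g₂) * ((η * δ) ^ (-(2 * (ε / 3))) * k₂ v)) := by
        gcongr <;> exact Finset.sum_nonneg fun i _ => mul_nonneg
          (Real.rpow_nonneg (hw.prob_pos i).le _) (by positivity)
    _ = C * ((η * δ) ^ (-(ε / 3)) * (η * δ) ^ (-(2 * (ε / 3)))) *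
        ((η ^ |g₁|)⁻¹ * k₁ v + (η ^ |g₂|)⁻¹ * k₂ v) * δ ^ (-max g₁ g₂) := by ring
    _ = _ := by
        rw [hpow, sub_eq_add_neg, Real.rpow_add hδ0]
        ring

lemma rpow_le_Dq2 (hSC : S.StronglyConnected) (hROSC : S.ROSC) (hdiag : ∀ e : E, S.diag e = true)
    (hp : S.IsWeights p) (hμ : S.IsGDMeasure p μ) {q τ₁ τ₂ x y : ℝ} (hq : 0 ≤ q)
    (h₁ : ∀ v, HasLq1 ((μ v).map Prod.fst) q τ₁) (h₂ : ∀ v, HasLq1 ((μ v).map Prod.snd) q τ₂)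
    (hρ : specRad (S.Fmat p q x y) = 1) (hx : x ≤ τ₁) (hy : y ≤ τ₂)
    {ε : ℝ} (hε : 0 < ε) (v : V) :
    ∃ C > 0, ∀ δ ∈ Ioo (0 : ℝ) 1, δ ^ (-(x + y) + ε) ≤ C * Dq2 (μ v) δ q := by
  have := hμ.1
  have hsupp := hμ.measure_compl_closedSq hdiag hROSC hp
  obtain ⟨η, r, hη, hη1, hr0, hr1, hr⟩ := S.exists_ratio_bounds
  have hε3 : 0 < ε / 3 := by positivity
  obtain ⟨C, hC, hB⟩ := exists_projBounds hsupp hq hε3 h₁ h₂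
  obtain ⟨h, hh1, hsuper⟩ := exists_superinvariant hSC hp.1 hε3 hρ
  obtain ⟨H, hH⟩ := (Set.finite_range h).bddAbove
  replace hH : ∀ u, h u ≤ H := fun u => hH (mem_range_self u)
  have hHpos : 0 < H := one_pos.trans_le ((hh1 v).trans (hH v))
  refine ⟨H * η ^ (-ε) * (η ^ |x + y|)⁻¹ * C *
    (9 ^ q * ((2 / η + 2) * (2 / η + 5) ^ 2)), by positivity, fun δ hδ => ?_⟩
  have hδ0 := hδ.1
  obtain ⟨ι, _, w, hw⟩ := exists_isCut hdiag hROSC hp hμ hη hη1 hr1 hr hδ v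
  have hsum := hw.one_le_sum hη hδ0 hε3.le hh1 hH hsuper
  have hcut := (hw.Dq2_comparable hsupp hη hδ0 hq).2
  have hcell : η ^ |x + y| * (η * δ) ^ (ε / 3) * δ ^ (-(x + y)) *
      ∑ i, (w i).prob ^ q * (|(w i).sx| ^ x * |(w i).sy| ^ y) ≤
      C * ∑ i, (w i).prob ^ q * (w i).projSum μ q := by
    simp only [Finset.mul_sum]
    refine Finset.sum_le_sum fun i _ => ?_
    rw [mul_left_comm, mul_left_comm C]
    exact mul_le_mul_of_nonneg_left (hw.le_projSum hη hδ0 hε3.le hB hx hy i)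
      (Real.rpow_nonneg (hw.prob_pos i).le _)
  set T := ∑ i, (w i).prob ^ q * (|(w i).sx| ^ x * |(w i).sy| ^ y) with hT
  have hηδ : 0 < η * δ := by positivity
  have hpow : δ ^ ε = η ^ (-ε) * (η * δ) ^ (2 * (ε / 3)) * (η * δ) ^ (ε / 3) := by
    rw [mul_assoc, ← Real.rpow_add hηδ, show 2 * (ε / 3) + ε / 3 = ε by ring,
      Real.mul_rpow hη.le hδ0.le, Real.rpow_neg hη.le]
    have := Real.rpow_pos_of_pos hη ε
    field_simp
  have hcancel : (η * δ) ^ (2 * (ε / 3)) * (η * δ) ^ (-(2 * (ε / 3))) = 1 := by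
    rw [← Real.rpow_add hηδ, add_neg_cancel, Real.rpow_zero]
  have hηg := Real.rpow_pos_of_pos hη |x + y|
  calc δ ^ (-(x + y) + ε) = δ ^ (-(x + y)) * (η ^ (-ε) * (η * δ) ^ (2 * (ε / 3)) *
        (η * δ) ^ (ε / 3)) * 1 := by rw [Real.rpow_add hδ0, hpow, mul_one]
    _ ≤ δ ^ (-(x + y)) * (η ^ (-ε) * (η * δ) ^ (2 * (ε / 3)) * (η * δ) ^ (ε / 3)) *
        ((η * δ) ^ (-(2 * (ε / 3))) * H * T) := by gcongr
    _ = H * η ^ (-ε) * ((η * δ) ^ (2 * (ε / 3)) * (η * δ) ^ (-(2 * (ε / 3)))) *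
        ((η * δ) ^ (ε / 3) * δ ^ (-(x + y)) * T) := by ring
    _ = H * η ^ (-ε) * (η ^ |x + y|)⁻¹ *
        (η ^ |x + y| * (η * δ) ^ (ε / 3) * δ ^ (-(x + y)) * T) := by
        rw [hcancel]
        field_simp
    _ ≤ H * η ^ (-ε) * (η ^ |x + y|)⁻¹ * (C * ∑ i, (w i).prob ^ q * (w i).projSum μ q) := by
        gcongr
    _ ≤ H * η ^ (-ε) * (η ^ |x + y|)⁻¹ *
        (C * (9 ^ q * ((2 / η + 2) * (2 / η + 5) ^ 2) * Dq2 (μ v) δ q)) := by gcongr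
    _ = _ := by ring

end BoxLikeGIFS

end LqGIFS

/-- closed form, non-rotational, case (a).  All `T_e` diagonal, ROSC,
`q ≥ 0`, and `max{γ_A(q), γ_B(q)} ≤ t(q)`.  Then every `τ_{μ_v}(q)` exists and equals
`max{γ_A(q), γ_B(q)}`, which is also the maximum of `x + y` over pairs with
`ρ(F^{(q)}_{x,y}) = 1` in either of the stated ranges. -/
theorem statement2
    {V E : Type} [Fintype V] [Fintype E] [Nonempty V]
    (S : BoxLikeGIFS V E) (hSC : S.StronglyConnected) (hROSC : S.ROSC)
    (hdiag : ∀ e : E, S.diag e = true)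
    (p : E → ℝ) (hp : S.IsWeights p)
    (μ : V → Measure (ℝ × ℝ)) (hμ : S.IsGDMeasure p μ)
    (τA τB : ℝ → ℝ)
    (hτA : ∀ q : ℝ, 0 ≤ q → ∀ v : V, HasLq1 ((μ v).map Prod.fst) q (τA q))
    (hτB : ∀ q : ℝ, 0 ≤ q → ∀ v : V, HasLq1 ((μ v).map Prod.snd) q (τB q))
    (q : ℝ) (hq : 0 ≤ q)
    (γA γB : ℝ)
    (hγA : specRad (S.Fmat p q (τA q) (γA - τA q)) = 1)
    (hγB : specRad (S.Fmat p q (γB - τB q) (τB q)) = 1)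
    (hcase : max γA γB ≤ τA q + τB q) :
    (∀ v : V, HasLq2 (μ v) q (max γA γB)) ∧
    IsGreatest {s : ℝ | ∃ x y : ℝ, specRad (S.Fmat p q x y) = 1 ∧
      γB - τB q ≤ x ∧ x ≤ τA q ∧ s = x + y} (max γA γB) ∧
    IsGreatest {s : ℝ | ∃ x y : ℝ, specRad (S.Fmat p q x y) = 1 ∧
      γA - τA q ≤ y ∧ y ≤ τB q ∧ s = x + y} (max γA γB) := by
  obtain ⟨hcA, hcB⟩ := max_le_iff.1 hcase
  obtain ⟨x, y, hρ, hx, hx', hy, hy', hxy⟩ : ∃ x y, specRad (S.Fmat p q x y) = 1 ∧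
      γB - τB q ≤ x ∧ x ≤ τA q ∧ γA - τA q ≤ y ∧ y ≤ τB q ∧ max γA γB = x + y := by
    rcases le_total γB γA with h | h
    · exact ⟨_, _, hγA, by linarith, le_rfl, le_rfl, by linarith, by rw [max_eq_left h]; ring⟩
    · exact ⟨_, _, hγB, le_rfl, by linarith, by linarith, le_rfl, by rw [max_eq_right h]; ring⟩
  have hchord : ∀ {θ₀ θ₁ : ℝ}, 0 ≤ θ₀ → 0 ≤ θ₁ → θ₀ + θ₁ = 1 →
      θ₀ * (γB - τB q) + θ₁ * τA q + (θ₀ * τB q + θ₁ * (γA - τA q)) ≤ max γA γB := by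
    intro θ₀ θ₁ h₀ h₁ hθ
    calc _ = θ₀ * γB + θ₁ * γA := by ring
      _ ≤ θ₀ * max γA γB + θ₁ * max γA γB := by
        gcongr
        exacts [le_max_right _ _, le_max_left _ _]
      _ = _ := by rw [← add_mul, hθ, one_mul]
  refine ⟨fun v => tendsto_log_div_of_bounds fun ε hε => ?_,
    ⟨⟨x, y, hρ, hx, hx', hxy⟩, ?_⟩, ⟨⟨x, y, hρ, hy, hy', hxy⟩, ?_⟩⟩
  · obtain ⟨C₁, hC₁, hle⟩ := BoxLikeGIFS.Dq2_le_rpow hSC hROSC hdiag hp hμ hq (hτA q hq) (hτB q hq)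
      hγA hγB hε v
    obtain ⟨C₂, hC₂, hge⟩ := BoxLikeGIFS.rpow_le_Dq2 hSC hROSC hdiag hp hμ hq (hτA q hq) (hτB q hq)
      hρ hx' hy' hε v
    rw [← hxy] at hge
    refine ⟨max C₁ C₂, lt_max_of_lt_left hC₁, fun δ hδ => ⟨?_, ?_⟩⟩
    · have hpos : 0 < C₂ * Dq2 (μ v) δ q := (Real.rpow_pos_of_pos hδ.1 _).trans_le (hge δ hδ)
      exact (hge δ hδ).trans (mul_le_mul_of_nonneg_right (le_max_right _ _)
        (pos_of_mul_pos_right hpos hC₂.le).le)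
    · exact (hle δ hδ).trans (mul_le_mul_of_nonneg_right (le_max_left _ _)
        (Real.rpow_nonneg hδ.1.le _))
  · rintro _ ⟨x, y, hρ, hl, hu, rfl⟩
    obtain ⟨θ₀, θ₁, h₀, h₁, hθ, rfl⟩ : x ∈ segment ℝ (γB - τB q) (τA q) := by
      rw [segment_eq_Icc (by linarith)]
      exact ⟨hl, hu⟩
    simp only [smul_eq_mul] at hρ ⊢
    refine le_trans ?_ (hchord h₀ h₁ hθ)
    rcases le_total y (θ₀ * τB q + θ₁ * (γA - τA q)) with h | h
    · linarith
    · exact S.add_le_of_specRad_eq_one hp.1 hγB hγA hρ h₀ h₁ hθ le_rfl h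
  · rintro _ ⟨x, y, hρ, hl, hu, rfl⟩
    obtain ⟨θ₁, θ₀, h₁, h₀, hθ, rfl⟩ : y ∈ segment ℝ (γA - τA q) (τB q) := by
      rw [segment_eq_Icc (by linarith)]
      exact ⟨hl, hu⟩
    rw [add_comm] at hθ
    simp only [smul_eq_mul] at hρ ⊢
    refine le_trans ?_ (hchord h₀ h₁ hθ)
    rcases le_total x (θ₀ * (γB - τB q) + θ₁ * τA q) with h | h
    · linarith
    · have := S.add_le_of_specRad_eq_one hp.1 hγB hγA hρ h₀ h₁ hθ h (by linarith)
      linarith
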